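/- In the complex numbers, F(1/8,1) + 8i·F(7/8,1) = −2·(1 − i√2)·(1 + √2)·(F(3/8,1) − 2i·F(5/8,1)). -/

import Mathlib

/-- The Pochhammer symbol (x)_k = x(x+1)⋯(x+k−1). -/
noncomputable def poch (x : ℝ) (k : ℕ) : ℝ := ∏ i ∈ Finset.range k, (x + i)

/-- The hypergeometric series ₃F₂(a1,a2,a3;b1,b2;1). -/
noncomputable def threeF2 (a1 a2 a3 b1 b2 : ℝ) : ℝ :=
  ∑' k : ℕ, poch a1 k * poch a2 k * poch a3 k /
    (poch b1 k * poch b2 k * (Nat.factorial k : ℝ))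

/-- The Beta function B(a,b) = Γ(a)Γ(b)/Γ(a+b). -/
noncomputable def betaFn (a b : ℝ) : ℝ :=
  Real.Gamma a * Real.Gamma b / Real.Gamma (a + b)

/-- The normalized hypergeometric value
F(r,s) = (2^{1−4r}·B(r,s−r)/N(r)) · ₃F₂(1/2,1/2,r;1,s;1), where N(r) = 2·den(r). -/
noncomputable def Fval (r s : ℚ) : ℝ :=
  (2:ℝ) ^ ((1:ℝ) - 4 * (r:ℝ)) * betaFn (r:ℝ) ((s:ℝ) - (r:ℝ)) / (2 * (r.den : ℝ)) *
    threeF2 (1/2) (1/2) (r:ℝ) 1 (s:ℝ)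

open MeasureTheory Set
open scoped ENNReal

/-- Change of variables for a bijection given with its inverse. -/
lemma lintegral_eq_of_bij {s t : Set ℝ} {f f' g : ℝ → ℝ} (hs : MeasurableSet s)
    (hf : ∀ x ∈ s, HasDerivAt f (f' x) x) (hst : ∀ x ∈ s, f x ∈ t) (hts : ∀ y ∈ t, g y ∈ s)
    (hgf : ∀ x ∈ s, g (f x) = x) (hfg : ∀ y ∈ t, f (g y) = y) (φ : ℝ → ℝ≥0∞) :
    ∫⁻ y in t, φ y = ∫⁻ x in s, ENNReal.ofReal |f' x| * φ (f x) := by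
  have himg : f '' s = t := by
    ext y
    constructor
    · rintro ⟨x, hx, rfl⟩
      exact hst x hx
    · intro hy
      exact ⟨g y, hts y hy, hfg y hy⟩
  have hinj : InjOn f s := fun x hx y hy h => by rw [← hgf x hx, ← hgf y hy, h]
  rw [← himg]
  exact lintegral_image_eq_lintegral_abs_deriv_mul hs (fun x hx => (hf x hx).hasDerivWithinAt)
    hinj φ

/-- Tonelli's theorem on the triangle `0 < p < u < 1`. -/
lemma lintegral_triangle_swap {F : ℝ → ℝ → ℝ≥0∞} (hF : Measurable (Function.uncurry F)) :
    ∫⁻ u in Ioo (0 : ℝ) 1, ∫⁻ p in Ioo 0 u, F u p =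
      ∫⁻ p in Ioo (0 : ℝ) 1, ∫⁻ u in Ioo p 1, F u p := by
  have hT : MeasurableSet {q : ℝ × ℝ | 0 < q.2 ∧ q.2 < q.1 ∧ q.1 < 1} :=
    (measurableSet_lt measurable_const measurable_snd).inter
      ((measurableSet_lt measurable_snd measurable_fst).inter
        (measurableSet_lt measurable_fst measurable_const))
  set G : ℝ → ℝ → ℝ≥0∞ := fun u p =>
    {q : ℝ × ℝ | 0 < q.2 ∧ q.2 < q.1 ∧ q.1 < 1}.indicator (Function.uncurry F) (u, p) with hG
  have hGm : Measurable (Function.uncurry G) := hF.indicator hT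
  have h1 : ∫⁻ u in Ioo (0 : ℝ) 1, ∫⁻ p in Ioo 0 u, F u p = ∫⁻ u, ∫⁻ p, G u p := by
    rw [← lintegral_indicator measurableSet_Ioo]
    refine lintegral_congr fun u => ?_
    by_cases hu : u ∈ Ioo (0 : ℝ) 1
    · rw [indicator_of_mem hu, ← lintegral_indicator measurableSet_Ioo]
      refine lintegral_congr fun p => ?_
      simp only [hG, indicator, mem_Ioo, mem_ofPred_eq, Function.uncurry]
      have := hu.2
      congr 1
      simp only [eq_iff_iff]; tauto
    · rw [indicator_of_notMem hu]
      symm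
      refine (lintegral_congr fun p => indicator_of_notMem ?_ _).trans lintegral_zero
      rintro ⟨h1, h2, h3⟩
      exact hu ⟨h1.trans h2, h3⟩
  have h2 : ∫⁻ p in Ioo (0 : ℝ) 1, ∫⁻ u in Ioo p 1, F u p = ∫⁻ p, ∫⁻ u, G u p := by
    rw [← lintegral_indicator measurableSet_Ioo]
    refine lintegral_congr fun p => ?_
    by_cases hp : p ∈ Ioo (0 : ℝ) 1
    · rw [indicator_of_mem hp, ← lintegral_indicator measurableSet_Ioo]
      refine lintegral_congr fun u => ?_
      simp only [hG, indicator, mem_Ioo, mem_ofPred_eq, Function.uncurry]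
      have := hp.1
      congr 1
      simp only [eq_iff_iff]; tauto
    · rw [indicator_of_notMem hp]
      symm
      refine (lintegral_congr fun u => indicator_of_notMem ?_ _).trans lintegral_zero
      rintro ⟨h1, h2, h3⟩
      exact hp ⟨h1, h2.trans h3⟩
  rw [h1, h2]
  exact lintegral_lintegral_swap hGm.aemeasurable

/-- `2 K(1 - p)`, with `K` the complete elliptic integral of the first kind in the parameter. -/
noncomputable def ellipticPeriod (p : ℝ) : ℝ≥0∞ :=
  ∫⁻ u in Ioo p 1, ENNReal.ofReal (√(u * (1 - u) * (u - p)))⁻¹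

lemma measurable_ellipticPeriod : Measurable ellipticPeriod := by
  have hT : MeasurableSet {q : ℝ × ℝ | q.1 < q.2 ∧ q.2 < 1} :=
    (measurableSet_lt measurable_fst measurable_snd).inter
      (measurableSet_lt measurable_snd measurable_const)
  have h : ellipticPeriod = fun p => ∫⁻ u, {q : ℝ × ℝ | q.1 < q.2 ∧ q.2 < 1}.indicator
      (fun q => ENNReal.ofReal (√(q.2 * (1 - q.2) * (q.2 - q.1)))⁻¹) (p, u) := by
    funext p
    rw [ellipticPeriod, ← lintegral_indicator measurableSet_Ioo]
    rfl
  rw [h]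
  refine Measurable.lintegral_prod_right' (Measurable.indicator ?_ hT)
  fun_prop

/-- The integral of `p ^ (-1/2) (1 - p) ^ (-r)` against `2 K(1 - p)`. -/
noncomputable def periodH (r : ℝ) : ℝ≥0∞ :=
  ∫⁻ p in Ioo (0 : ℝ) 1, ENNReal.ofReal ((√p)⁻¹ * (1 - p) ^ (-r)) * ellipticPeriod p

/-- The integral of `x ^ (-1/2) (1 - x) ^ (-r)` against `2 K(x)`. -/
noncomputable def periodJ (r : ℝ) : ℝ≥0∞ :=
  ∫⁻ x in Ioo (0 : ℝ) 1, ENNReal.ofReal ((√x)⁻¹ * (1 - x) ^ (-r)) * ellipticPeriod (1 - x)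

lemma lintegral_arcsine_mul_left (r : ℝ) :
    ∫⁻ u in Ioo (0 : ℝ) 1, ENNReal.ofReal (√(u * (1 - u)))⁻¹ *
      ∫⁻ p in Ioo 0 u, ENNReal.ofReal ((√(p * (u - p)))⁻¹ * (1 - p) ^ (-r)) = periodH r := by
  have hm : Measurable (Function.uncurry fun u p : ℝ => ENNReal.ofReal (√(u * (1 - u)))⁻¹ *
      ENNReal.ofReal ((√(p * (u - p)))⁻¹ * (1 - p) ^ (-r))) := by
    simp only [Function.uncurry_def]
    fun_prop
  calc _ = ∫⁻ u in Ioo (0 : ℝ) 1, ∫⁻ p in Ioo 0 u, ENNReal.ofReal (√(u * (1 - u)))⁻¹ *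
          ENNReal.ofReal ((√(p * (u - p)))⁻¹ * (1 - p) ^ (-r)) := by
        refine lintegral_congr fun u => ?_
        rw [lintegral_const_mul _ (by fun_prop)]
    _ = _ := by
        rw [lintegral_triangle_swap hm, periodH]
        refine setLIntegral_congr_fun measurableSet_Ioo fun p hp => ?_
        have h0 := hp.1
        have h1 := hp.2
        simp only [ellipticPeriod]
        rw [← lintegral_const_mul _ (by fun_prop)]
        refine setLIntegral_congr_fun measurableSet_Ioo fun u hu => ?_
        have h2 := hu.1
        have h3 := hu.2
        rw [← ENNReal.ofReal_mul (by positivity), ← ENNReal.ofReal_mul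
          (mul_nonneg (by positivity) (Real.rpow_nonneg (by linarith) _))]
        congr 1
        rw [Real.sqrt_mul (by linarith), Real.sqrt_mul (by linarith),
          Real.sqrt_mul (mul_nonneg (by linarith) (by linarith)), Real.sqrt_mul (by linarith)]
        simp only [mul_inv]
        ring

lemma lintegral_arcsine_mul_right (r : ℝ) :
    ∫⁻ u in Ioo (0 : ℝ) 1, ENNReal.ofReal (√(u * (1 - u)))⁻¹ *
      ∫⁻ x in Ioo u 1, ENNReal.ofReal ((√(x * (x - u)))⁻¹ * (1 - x) ^ (-r)) = periodJ r := by
  have hm : Measurable (Function.uncurry fun x u : ℝ => ENNReal.ofReal (√(u * (1 - u)))⁻¹ *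
      ENNReal.ofReal ((√(x * (x - u)))⁻¹ * (1 - x) ^ (-r))) := by
    simp only [Function.uncurry_def]
    fun_prop
  calc _ = ∫⁻ u in Ioo (0 : ℝ) 1, ∫⁻ x in Ioo u 1, ENNReal.ofReal (√(u * (1 - u)))⁻¹ *
          ENNReal.ofReal ((√(x * (x - u)))⁻¹ * (1 - x) ^ (-r)) := by
        refine lintegral_congr fun u => ?_
        rw [lintegral_const_mul _ (by fun_prop)]
    _ = _ := by
        rw [← lintegral_triangle_swap hm, periodJ]
        refine setLIntegral_congr_fun measurableSet_Ioo fun x hx => ?_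
        have h0 := hx.1
        have h1 := hx.2
        simp only [ellipticPeriod]
        rw [lintegral_eq_of_bij (f := fun u => 1 - u) (f' := fun _ => -1) (g := fun u => 1 - u)
          (s := Ioo 0 x) (t := Ioo (1 - x) 1) measurableSet_Ioo
          (fun u _ => by simpa using (hasDerivAt_id u).const_sub 1)
          (fun u hu => ⟨by linarith [hu.2], by linarith [hu.1]⟩)
          (fun u hu => ⟨by linarith [hu.2], by linarith [hu.1]⟩)
          (fun u _ => by ring) (fun u _ => by ring), ← lintegral_const_mul _ (by fun_prop)]
        refine setLIntegral_congr_fun measurableSet_Ioo fun u hu => ?_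
        have h2 := hu.1
        have h3 := hu.2
        rw [← ENNReal.ofReal_mul (by positivity), ← ENNReal.ofReal_mul (by positivity),
          ← ENNReal.ofReal_mul
          (mul_nonneg (by positivity) (Real.rpow_nonneg (by linarith) _))]
        congr 1
        have e : (1 - u) * (1 - (1 - u)) * (1 - u - (1 - x)) = u * (1 - u) * (x - u) := by ring
        rw [e, Real.sqrt_mul (by linarith), Real.sqrt_mul (by linarith),
          Real.sqrt_mul (mul_nonneg (by linarith) (by linarith)), Real.sqrt_mul (by linarith)]
        simp only [mul_inv, abs_neg, abs_one]
        ring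

lemma ellipticPeriod_div_one_add {y : ℝ} (hy : 0 < y) :
    ellipticPeriod (y / (1 + y)) = ENNReal.ofReal (√(1 + y)) *
      ∫⁻ u in Ioo (0 : ℝ) 1, ENNReal.ofReal (√(u * (1 - u) * (u + y)))⁻¹ := by
  rw [ellipticPeriod, lintegral_eq_of_bij (f := fun u => (u + y) / (1 + y))
    (f' := fun _ => 1 / (1 + y)) (g := fun v => v * (1 + y) - y)
    (s := Ioo 0 1) (t := Ioo (y / (1 + y)) 1) measurableSet_Ioo
    (fun u _ => ((hasDerivAt_id u).add_const y).div_const _)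
    (fun u hu => ⟨by gcongr; linarith [hu.1], by rw [div_lt_one (by positivity)]; linarith [hu.2]⟩)
    (fun v hv => ⟨by have := hv.1; rw [div_lt_iff₀ (by positivity)] at this; linarith,
      by nlinarith [hv.2]⟩)
    (fun u _ => by field_simp; ring) (fun u _ => by field_simp; ring),
    ← lintegral_const_mul _ (by fun_prop)]
  refine setLIntegral_congr_fun measurableSet_Ioo fun u hu => ?_
  have h0 := hu.1
  have h1 := hu.2
  rw [← ENNReal.ofReal_mul (by positivity), ← ENNReal.ofReal_mul (by positivity)]
  congr 1
  have e : (u + y) / (1 + y) * (1 - (u + y) / (1 + y)) * ((u + y) / (1 + y) - y / (1 + y)) =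
      u * (1 - u) * (u + y) / (1 + y) ^ 2 / (1 + y) := by field_simp; ring
  have h2 : 0 < 1 + y := by positivity
  rw [e, Real.sqrt_div' _ h2.le, Real.sqrt_div' _ (by positivity), Real.sqrt_sq h2.le,
    abs_of_pos (by positivity)]
  have : 0 < √(u * (1 - u) * (u + y)) := Real.sqrt_pos.2
    (mul_pos (mul_pos h0 (by linarith)) (by linarith))
  field_simp

lemma lintegral_arcsine_mul_neg (r : ℝ) :
    ∫⁻ u in Ioo (0 : ℝ) 1, ENNReal.ofReal (√(u * (1 - u)))⁻¹ *
      ∫⁻ y in Ioi 0, ENNReal.ofReal ((√(y * (u + y)))⁻¹ * (1 + y) ^ (-r)) = periodH (1 - r) := by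
  have hm : Measurable (Function.uncurry fun u y : ℝ => ENNReal.ofReal (√(u * (1 - u)))⁻¹ *
      ENNReal.ofReal ((√(y * (u + y)))⁻¹ * (1 + y) ^ (-r))) := by
    simp only [Function.uncurry_def]
    fun_prop
  calc _ = ∫⁻ u in Ioo (0 : ℝ) 1, ∫⁻ y in Ioi 0, ENNReal.ofReal (√(u * (1 - u)))⁻¹ *
          ENNReal.ofReal ((√(y * (u + y)))⁻¹ * (1 + y) ^ (-r)) := by
        refine lintegral_congr fun u => ?_
        rw [lintegral_const_mul _ (by fun_prop)]
    _ = _ := by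
        rw [lintegral_lintegral_swap hm.aemeasurable, periodH,
          lintegral_eq_of_bij (f := fun y => y / (1 + y)) (f' := fun y => 1 / (1 + y) ^ 2)
          (g := fun p => p / (1 - p)) (s := Ioi 0) (t := Ioo 0 1) measurableSet_Ioi
          (fun y hy => by
            have hy : 0 < y := hy
            have := (hasDerivAt_id y).div ((hasDerivAt_id y).const_add 1)
              (by simp only [id]; positivity)
            refine this.congr_deriv ?_
            simp only [id]
            field_simp
            ring)
          (fun y hy => by
            have hy : 0 < y := hy
            exact ⟨by positivity, by rw [div_lt_one (by positivity)]; linarith⟩)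
          (fun p hp => div_pos hp.1 (by linarith [hp.2]))
          (fun y hy => by
            have hy : 0 < y := hy
            field_simp; ring)
          (fun p hp => by
            have : 1 - p ≠ 0 := by linarith [hp.2]
            field_simp; ring)]
        refine setLIntegral_congr_fun measurableSet_Ioi fun y hy => ?_
        have hy : 0 < y := hy
        have h1 : 0 < 1 + y := by positivity
        rw [ellipticPeriod_div_one_add hy, ← mul_assoc, ← mul_assoc,
          ← lintegral_const_mul _ (by fun_prop)]
        refine setLIntegral_congr_fun measurableSet_Ioo fun u hu => ?_
        have h2 := hu.1
        have h3 := hu.2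
        have e : 1 - y / (1 + y) = (1 + y)⁻¹ := by field_simp; ring
        have hp : (0:ℝ) ≤ (√(y / (1 + y)))⁻¹ * (1 - y / (1 + y)) ^ (-(1 - r)) :=
          mul_nonneg (by positivity) (by rw [e]; positivity)
        rw [← ENNReal.ofReal_mul (by positivity), ← ENNReal.ofReal_mul (by positivity),
          ← ENNReal.ofReal_mul (mul_nonneg (by positivity) hp),
          ← ENNReal.ofReal_mul (mul_nonneg (mul_nonneg (by positivity) hp) (by positivity))]
        congr 1
        rw [e, Real.sqrt_mul h2.le, Real.sqrt_mul hy.le, Real.sqrt_div hy.le,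
          Real.sqrt_mul (mul_nonneg h2.le (by linarith)), Real.sqrt_mul h2.le,
          abs_of_pos (by positivity), Real.inv_rpow h1.le, ← Real.rpow_neg h1.le,
          show - -(1 - r) = 1 + -r by ring, Real.rpow_add h1, Real.rpow_one]
        have s1 := Real.sq_sqrt h1.le
        simp only [mul_inv, inv_div]
        have : 0 < √(1 + y) := Real.sqrt_pos.2 h1
        have h4 : 0 < √y := Real.sqrt_pos.2 hy
        field_simp
        rw [s1]

/-- The integral over the positive half-line of `((x² + a²) (x² + b²)) ^ (-1/2)`. -/
noncomputable def agmPeriod (a b : ℝ) : ℝ≥0∞ :=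
  ∫⁻ x in Ioi 0, ENNReal.ofReal (√((x ^ 2 + a ^ 2) * (x ^ 2 + b ^ 2)))⁻¹

lemma ellipticPeriod_sq {b : ℝ} (hb : 0 < b) (hb1 : b < 1) :
    ellipticPeriod (b ^ 2) = 2 * agmPeriod 1 b := by
  have hb2 : 0 < 1 - b ^ 2 := by nlinarith
  rw [ellipticPeriod, agmPeriod,
    lintegral_eq_of_bij (f := fun x => (x ^ 2 + b ^ 2) / (x ^ 2 + 1))
    (f' := fun x => 2 * x * (1 - b ^ 2) / (x ^ 2 + 1) ^ 2)
    (g := fun u => √((u - b ^ 2) / (1 - u)))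
    (s := Ioi 0) (t := Ioo (b ^ 2) 1) measurableSet_Ioi
    (fun x _ => by
      have := ((hasDerivAt_pow 2 x).add_const (b ^ 2)).div ((hasDerivAt_pow 2 x).add_const 1)
        (by positivity)
      refine this.congr_deriv ?_
      field_simp
      ring)
    (fun x hx => by
      have hx : 0 < x := hx
      refine ⟨?_, ?_⟩
      · rw [lt_div_iff₀ (by positivity)]; nlinarith [mul_pos (pow_pos hx 2) hb2]
      · rw [div_lt_one (by positivity)]; linarith)
    (fun u hu => Real.sqrt_pos.2 (div_pos (by linarith [hu.1]) (by linarith [hu.2])))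
    (fun x hx => by
      have hx : 0 < x := hx
      have : ((x ^ 2 + b ^ 2) / (x ^ 2 + 1) - b ^ 2) / (1 - (x ^ 2 + b ^ 2) / (x ^ 2 + 1)) =
          x ^ 2 := by
        have h1 : 1 - (x ^ 2 + b ^ 2) / (x ^ 2 + 1) = (1 - b ^ 2) / (x ^ 2 + 1) := by
          field_simp; ring
        rw [h1]
        field_simp
        ring
      simp only [this, Real.sqrt_sq hx.le])
    (fun u hu => by
      have h1 : 0 < 1 - u := by linarith [hu.2]
      have h2 : 0 < u - b ^ 2 := by linarith [hu.1]
      simp only [Real.sq_sqrt (div_pos h2 h1).le]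
      have h3 : (u - b ^ 2) / (1 - u) + 1 = (1 - b ^ 2) / (1 - u) := by field_simp; ring
      rw [h3]
      field_simp
      ring), ← lintegral_const_mul _ (by fun_prop)]
  refine setLIntegral_congr_fun measurableSet_Ioi fun x hx => ?_
  have hx : 0 < x := hx
  have h2 : (2 : ℝ≥0∞) = ENNReal.ofReal 2 := by simp
  rw [h2, ← ENNReal.ofReal_mul (by positivity), ← ENNReal.ofReal_mul (by positivity)]
  congr 1
  have e : (x ^ 2 + b ^ 2) / (x ^ 2 + 1) * (1 - (x ^ 2 + b ^ 2) / (x ^ 2 + 1)) *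
      ((x ^ 2 + b ^ 2) / (x ^ 2 + 1) - b ^ 2) =
      ((x ^ 2 + 1 ^ 2) * (x ^ 2 + b ^ 2)) * (x * (1 - b ^ 2) / (x ^ 2 + 1) ^ 2) ^ 2 := by
    field_simp
    ring
  rw [e, Real.sqrt_mul (by positivity), Real.sqrt_sq (by positivity), abs_of_pos (by positivity)]
  have : 0 < √((x ^ 2 + 1 ^ 2) * (x ^ 2 + b ^ 2)) := Real.sqrt_pos.2 (by positivity)
  field_simp

lemma agmPeriod_mul {a b c : ℝ} (hc : 0 < c) (ha : 0 < a) (hb : 0 < b) :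
    agmPeriod (c * a) (c * b) = ENNReal.ofReal c⁻¹ * agmPeriod a b := by
  rw [agmPeriod, agmPeriod, lintegral_eq_of_bij (f := fun x => c * x) (f' := fun _ => c)
    (g := fun x => x / c) (s := Ioi 0) (t := Ioi 0) measurableSet_Ioi
    (fun x _ => by simpa using (hasDerivAt_id x).const_mul c)
    (fun x hx => mul_pos hc hx) (fun x hx => div_pos hx hc)
    (fun x _ => by field_simp) (fun x _ => by field_simp), ← lintegral_const_mul _ (by fun_prop)]
  refine setLIntegral_congr_fun measurableSet_Ioi fun x hx => ?_
  have hx : 0 < x := hx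
  rw [← ENNReal.ofReal_mul (by positivity), ← ENNReal.ofReal_mul (by positivity)]
  congr 1
  have e : ((c * x) ^ 2 + (c * a) ^ 2) * ((c * x) ^ 2 + (c * b) ^ 2) =
      (x ^ 2 + a ^ 2) * (x ^ 2 + b ^ 2) * (c ^ 2) ^ 2 := by ring
  rw [e, Real.sqrt_mul (by positivity), Real.sqrt_sq (by positivity), abs_of_pos hc]
  have : 0 < √((x ^ 2 + a ^ 2) * (x ^ 2 + b ^ 2)) := Real.sqrt_pos.2 (by positivity)
  field_simp

lemma lintegral_of_even {φ : ℝ → ℝ≥0∞} (hφ : ∀ x, φ (-x) = φ x) :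
    ∫⁻ x, φ x = 2 * ∫⁻ x in Ioi 0, φ x := by
  have h : ∫⁻ x in Iio 0, φ x = ∫⁻ x in Ioi 0, φ x := by
    rw [lintegral_eq_of_bij (f := fun x => -x) (f' := fun _ => -1) (g := fun x => -x)
      (s := Ioi 0) (t := Iio 0) measurableSet_Ioi (fun x _ => hasDerivAt_neg x)
      (fun x hx => by simpa using hx) (fun x hx => by simpa using hx) (fun x _ => neg_neg x)
      (fun x _ => neg_neg x)]
    simp [hφ]
  rw [← lintegral_add_compl φ (measurableSet_Ioi (a := (0 : ℝ))), compl_Ioi,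
    setLIntegral_congr Iio_ae_eq_Iic.symm, h, two_mul]

/-- Gauss's invariance of the complete elliptic integral under one step of the
arithmetic-geometric mean. -/
lemma agmPeriod_mean {a b c : ℝ} (ha : 0 < a) (hb : 0 < b) (hc : 0 < c) (habc : c ^ 2 = a * b) :
    agmPeriod ((a + b) / 2) c = agmPeriod a b := by
  have key : 2 * agmPeriod ((a + b) / 2) c = 2 * agmPeriod a b := by
    have hr (x : ℝ) : 0 < √(x ^ 2 + c ^ 2) := Real.sqrt_pos.2 (by positivity)
    rw [agmPeriod, ← lintegral_of_even (fun x => by simp), ← setLIntegral_univ,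
      lintegral_eq_of_bij (f := fun t => (t - c ^ 2 / t) / 2)
      (f' := fun t => (1 + c ^ 2 / t ^ 2) / 2)
      (g := fun x => x + √(x ^ 2 + c ^ 2)) (s := Ioi 0) (t := univ) measurableSet_Ioi
      (fun t ht => by
        have ht : t ≠ 0 := ne_of_gt ht
        have := ((hasDerivAt_id t).sub ((hasDerivAt_inv ht).const_mul (c ^ 2))).div_const 2
        simp only [div_eq_mul_inv] at this ⊢
        refine this.congr_deriv ?_
        ring)
      (fun t _ => mem_univ _)
      (fun x _ => by
        have h : √(x ^ 2) < √(x ^ 2 + c ^ 2) := Real.sqrt_lt_sqrt (by positivity)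
          (by linarith [pow_pos hc 2])
        rw [Real.sqrt_sq_eq_abs] at h
        exact mem_Ioi.2 (by linarith [neg_abs_le x]))
      (fun t ht => by
        have ht : 0 < t := ht
        have : ((t - c ^ 2 / t) / 2) ^ 2 + c ^ 2 = ((t + c ^ 2 / t) / 2) ^ 2 := by
          field_simp; ring
        simp only [this]
        rw [Real.sqrt_sq (by positivity)]
        ring)
      (fun x _ => by
        have h := Real.sq_sqrt (show 0 ≤ x ^ 2 + c ^ 2 by positivity)
        have h1 : 0 < x + √(x ^ 2 + c ^ 2) := by
          have h : √(x ^ 2) < √(x ^ 2 + c ^ 2) := Real.sqrt_lt_sqrt (by positivity)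
            (by linarith [pow_pos hc 2])
          rw [Real.sqrt_sq_eq_abs] at h
          linarith [neg_abs_le x]
        field_simp
        nlinarith), agmPeriod, ← lintegral_const_mul _ (by fun_prop)]
    refine setLIntegral_congr_fun measurableSet_Ioi fun t ht => ?_
    have ht : 0 < t := ht
    have h2 : (2 : ℝ≥0∞) = ENNReal.ofReal 2 := by simp
    rw [h2, ← ENNReal.ofReal_mul (by positivity), ← ENNReal.ofReal_mul (by positivity)]
    congr 1
    have e : (((t - c ^ 2 / t) / 2) ^ 2 + ((a + b) / 2) ^ 2) * (((t - c ^ 2 / t) / 2) ^ 2 + c ^ 2)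
        = ((t ^ 2 + a ^ 2) * (t ^ 2 + b ^ 2)) * ((1 + c ^ 2 / t ^ 2) / 4) ^ 2 := by
      rw [habc]
      field_simp
      ring
    rw [e, Real.sqrt_mul (by positivity), Real.sqrt_sq (by positivity), abs_of_pos (by positivity)]
    have : 0 < √((t ^ 2 + a ^ 2) * (t ^ 2 + b ^ 2)) := Real.sqrt_pos.2 (by positivity)
    field_simp
    ring
  exact (ENNReal.mul_right_inj (by simp) (by simp)).1 key

/-- The quartic (twofold Landen) transformation of the complete elliptic integral. -/
lemma ellipticPeriod_quartic {x : ℝ} (hx : 0 < x) (hx1 : x < 1) :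
    ellipticPeriod (((1 - x) / (1 + x)) ^ 4) =
      ENNReal.ofReal ((1 + x) ^ 2) * ellipticPeriod (1 - x ^ 4) := by
  have h1 : 0 < 1 - x := by linarith
  have hx4 : x ^ 4 < 1 := pow_lt_one₀ hx.le hx1 (by norm_num)
  set s := (1 - x) / (1 + x) with hs
  have hs0 : 0 < s := by positivity
  have hs1 : s < 1 := by rw [hs, div_lt_one (by positivity)]; linarith
  have hb0 : 0 < √(1 - x ^ 4) := Real.sqrt_pos.2 (by linarith)
  have hbs := Real.sq_sqrt (show 0 ≤ 1 - x ^ 4 by linarith)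
  have hb1 : √(1 - x ^ 4) < 1 := by nlinarith [pow_pos hx 4]
  set b := √(1 - x ^ 4)
  set c := ((1 + x) ^ 2)⁻¹ with hc
  have hc0 : 0 < c := by positivity
  calc ellipticPeriod (s ^ 4) = ellipticPeriod ((s ^ 2) ^ 2) := by ring_nf
    _ = 2 * agmPeriod 1 (s ^ 2) := ellipticPeriod_sq (by positivity) (by nlinarith)
    _ = 2 * agmPeriod ((1 + s ^ 2) / 2) s := by
        rw [agmPeriod_mean one_pos (by positivity) hs0 (by ring)]
    _ = 2 * agmPeriod (((1 + s ^ 2) / 2 + s) / 2) (c * b) := by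
        rw [agmPeriod_mean (by positivity) hs0 (by positivity)]
        rw [mul_pow, hbs, hc, hs]
        field_simp
        ring
    _ = 2 * agmPeriod (c * 1) (c * b) := by
        congr 2
        rw [hc, hs]
        field_simp
        ring
    _ = _ := by
        rw [agmPeriod_mul hc0 one_pos hb0, ← hbs, ellipticPeriod_sq hb0 hb1, hc, inv_inv]
        ring

/-- Integration over the fourth root of the elliptic parameter, with a polynomial weight. -/
noncomputable def quarticPeriod (f : ℝ → ℝ) : ℝ≥0∞ :=
  ∫⁻ x in Ioo (0 : ℝ) 1,
    ENNReal.ofReal (4 * (√x)⁻¹ * (√(1 - x ^ 4))⁻¹ * f x) * ellipticPeriod (1 - x ^ 4)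

lemma quarticPeriod_add {f g : ℝ → ℝ} (hf : ∀ x ∈ Ioo (0 : ℝ) 1, 0 ≤ f x)
    (hg : ∀ x ∈ Ioo (0 : ℝ) 1, 0 ≤ g x) (hfm : Measurable f) :
    quarticPeriod (fun x => f x + g x) = quarticPeriod f + quarticPeriod g := by
  have hm := measurable_ellipticPeriod
  rw [quarticPeriod, quarticPeriod, quarticPeriod, ← lintegral_add_left (by fun_prop)]
  refine setLIntegral_congr_fun measurableSet_Ioo fun x hx => ?_
  rw [← add_mul, mul_add, ENNReal.ofReal_add (mul_nonneg (by positivity) (hf x hx))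
    (mul_nonneg (by positivity) (hg x hx))]

lemma quarticPeriod_const_mul {c : ℝ} (hc : 0 ≤ c) {f : ℝ → ℝ} (hfm : Measurable f) :
    quarticPeriod (fun x => c * f x) = ENNReal.ofReal c * quarticPeriod f := by
  have hm := measurable_ellipticPeriod
  rw [quarticPeriod, quarticPeriod, ← lintegral_const_mul _ (by fun_prop)]
  refine setLIntegral_congr_fun measurableSet_Ioo fun x hx => ?_
  symm
  rw [← mul_assoc, ← ENNReal.ofReal_mul hc]
  congr 2
  ring

lemma periodH_eq_quarticPeriod (j : ℕ) :
    periodH (1 - (2 * j + 1) / 8) = quarticPeriod (fun x => x ^ j) := by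
  rw [periodH, quarticPeriod, lintegral_eq_of_bij (f := fun x => 1 - x ^ 4)
    (f' := fun x => -(4 * x ^ 3)) (g := fun p => √√(1 - p)) (s := Ioo 0 1) (t := Ioo 0 1)
    measurableSet_Ioo
    (fun x _ => by simpa using (hasDerivAt_pow 4 x).const_sub 1)
    (fun x hx => ⟨by linarith [pow_lt_one₀ hx.1.le hx.2 (n := 4) (by norm_num)],
      by linarith [pow_pos hx.1 4]⟩)
    (fun p hp => by
      have h1 : 0 < 1 - p := by linarith [hp.2]
      refine ⟨by positivity, ?_⟩
      rw [Real.sqrt_lt' one_pos, one_pow, Real.sqrt_lt' one_pos]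
      linarith [hp.1])
    (fun x hx => by
      have h0 := hx.1.le
      have : 1 - (1 - x ^ 4) = (x ^ 2) ^ 2 := by ring
      simp only [this]
      rw [Real.sqrt_sq (by positivity), Real.sqrt_sq h0])
    (fun p hp => by
      have h1 : 0 ≤ 1 - p := by linarith [hp.2]
      have : √√(1 - p) ^ 4 = (√√(1 - p) ^ 2) ^ 2 := by ring
      simp only [this]
      rw [Real.sq_sqrt (by positivity), Real.sq_sqrt h1]
      ring)]
  refine setLIntegral_congr_fun measurableSet_Ioo fun x hx => ?_
  have h0 := hx.1
  have h1 : 1 - (1 - x ^ 4) = x ^ 4 := by ring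
  rw [← mul_assoc, ← ENNReal.ofReal_mul (by positivity), h1]
  congr 2
  have h2 : (x ^ 4) ^ (-(1 - (2 * (j : ℝ) + 1) / 8)) = x ^ j * (√x)⁻¹ * (x ^ 3)⁻¹ := by
    rw [← Real.rpow_natCast x 4, ← Real.rpow_mul h0.le, Real.sqrt_eq_rpow, ← Real.rpow_natCast x j,
      ← Real.rpow_natCast x 3, ← Real.rpow_neg h0.le, ← Real.rpow_neg h0.le, ← Real.rpow_add h0,
      ← Real.rpow_add h0]
    congr 1
    push_cast
    ring
  rw [h2, abs_neg, abs_of_pos (by positivity)]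
  field_simp

lemma sqrt_two_mul_periodJ {i j : ℕ} (hij : i + j = 3) :
    ENNReal.ofReal √2 * periodJ ((2 * j + 1) / 8) =
      quarticPeriod (fun x => (1 - x) ^ i * (1 + x) ^ j) := by
  rw [periodJ, quarticPeriod, lintegral_eq_of_bij (f := fun x => 1 - ((1 - x) / (1 + x)) ^ 4)
    (f' := fun x => 8 * (1 - x) ^ 3 / (1 + x) ^ 5)
    (g := fun y => (1 - √√(1 - y)) / (1 + √√(1 - y))) (s := Ioo 0 1) (t := Ioo 0 1)
    measurableSet_Ioo
    (fun x hx => by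
      have h1 : 1 + x ≠ 0 := by linarith [hx.1]
      have := ((((hasDerivAt_id x).const_sub 1).div ((hasDerivAt_id x).const_add 1) h1).pow
        4).const_sub 1
      refine this.congr_deriv ?_
      simp only [id, Pi.div_apply, div_pow]
      field_simp
      ring)
    (fun x hx => by
      have h0 := hx.1
      have h1 : 0 < 1 - x := by linarith [hx.2]
      have h2 : (1 - x) / (1 + x) < 1 := by rw [div_lt_one (by positivity)]; linarith
      refine ⟨?_, ?_⟩
      · linarith [pow_lt_one₀ (by positivity) h2 (n := 4) (by norm_num)]
      · have : 0 < ((1 - x) / (1 + x)) ^ 4 := by positivity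
        linarith)
    (fun y hy => by
      have h1 : 0 < 1 - y := by linarith [hy.2]
      have h2 : √√(1 - y) < 1 := by
        rw [Real.sqrt_lt' one_pos, one_pow, Real.sqrt_lt' one_pos]
        linarith [hy.1]
      have h3 : 0 < √√(1 - y) := by positivity
      refine ⟨div_pos (by linarith) (by positivity), ?_⟩
      rw [div_lt_one (by positivity)]
      linarith)
    (fun x hx => by
      have h0 := hx.1
      have h1 : 0 < 1 - x := by linarith [hx.2]
      have : 1 - (1 - ((1 - x) / (1 + x)) ^ 4) = (((1 - x) / (1 + x)) ^ 2) ^ 2 := by ring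
      simp only [this]
      rw [Real.sqrt_sq (by positivity), Real.sqrt_sq (by positivity)]
      field_simp
      ring)
    (fun y hy => by
      have h1 : 0 < 1 - y := by linarith [hy.2]
      have h3 : 0 < √√(1 - y) := by positivity
      have e : √√(1 - y) ^ 4 = 1 - y := by
        have : √√(1 - y) ^ 4 = (√√(1 - y) ^ 2) ^ 2 := by ring
        rw [this, Real.sq_sqrt (by positivity), Real.sq_sqrt h1.le]
      set q := √√(1 - y)
      have : (1 - (1 - q) / (1 + q)) / (1 + (1 - q) / (1 + q)) = q := by
        field_simp
        ring
      simp only [this, e]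
      ring), ← lintegral_const_mul' _ _ (by simp)]
  refine setLIntegral_congr_fun measurableSet_Ioo fun x hx => ?_
  have h0 := hx.1
  have h1 : 0 < 1 - x := by linarith [hx.2]
  have e1 : 1 - (1 - ((1 - x) / (1 + x)) ^ 4) = ((1 - x) / (1 + x)) ^ 4 := by ring
  rw [e1, ellipticPeriod_quartic h0 hx.2, ← mul_assoc, ← mul_assoc, ← mul_assoc,
    ← ENNReal.ofReal_mul (by positivity), ← ENNReal.ofReal_mul (by positivity),
    ← ENNReal.ofReal_mul (by positivity)]
  congr 2
  have e2 : (((1 - x) / (1 + x)) ^ 4) ^ (-((2 * (j : ℝ) + 1) / 8)) =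
      ((1 + x) / (1 - x)) ^ j * (√(1 + x) / √(1 - x)) := by
    have hs : 0 < (1 - x) / (1 + x) := by positivity
    rw [← Real.sqrt_div (by positivity), ← inv_div (1 - x) (1 + x), Real.sqrt_inv, inv_pow,
      Real.sqrt_eq_rpow, ← Real.rpow_natCast _ 4, ← Real.rpow_mul hs.le, ← Real.rpow_natCast _ j,
      ← Real.rpow_neg hs.le, ← Real.rpow_neg hs.le, ← Real.rpow_add hs]
    congr 1
    push_cast
    ring
  have e3 : 1 - ((1 - x) / (1 + x)) ^ 4 = 2 * x * (1 + x ^ 2) * (2 / (1 + x) ^ 2) ^ 2 := by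
    field_simp
    ring
  have e4 : 1 - x ^ 4 = (1 - x) * (1 + x) * (1 + x ^ 2) := by ring
  have e5 : (1 - x) ^ 3 = (1 - x) ^ i * (1 - x) ^ j := by rw [← pow_add, hij]
  rw [e2, e3, e4, Real.sqrt_mul (by positivity), Real.sqrt_sq (by positivity),
    Real.sqrt_mul (by positivity), Real.sqrt_mul (by positivity), Real.sqrt_mul (by positivity),
    Real.sqrt_mul h1.le, abs_of_pos (by positivity), div_pow, e5]
  have p1 : 0 < √(1 - x) := Real.sqrt_pos.2 h1
  have p2 : 0 < √(1 + x) := Real.sqrt_pos.2 (by positivity)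
  have p3 : √(1 + x) ^ 2 = 1 + x := Real.sq_sqrt (by positivity)
  field_simp
  rw [p3]
  ring

/-- The polynomial identity `(1 - x)³ + 3x + x³ = 1 + 3x²` at the level of periods. -/
lemma sqrt_two_mul_periodJ_one :
    ENNReal.ofReal √2 * periodJ (1 / 8) + ENNReal.ofReal 3 * periodH (5 / 8) + periodH (1 / 8) =
      periodH (7 / 8) + ENNReal.ofReal 3 * periodH (3 / 8) := by
  have hJ := sqrt_two_mul_periodJ (i := 3) (j := 0) rfl
  have h0 := periodH_eq_quarticPeriod 0
  have h1 := periodH_eq_quarticPeriod 1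
  have h2 := periodH_eq_quarticPeriod 2
  have h3 := periodH_eq_quarticPeriod 3
  norm_num at hJ h0 h1 h2 h3
  rw [hJ, h0, h1, h2, h3, ← quarticPeriod_const_mul (by norm_num) (by fun_prop),
    ← quarticPeriod_const_mul (by norm_num) (by fun_prop), ← quarticPeriod_add, ← quarticPeriod_add,
    ← quarticPeriod_add]
  · congr 1
    funext x
    ring
  all_goals first
    | fun_prop
    | (intro x hx
       have h0 := hx.1
       have h1 : 0 < 1 - x := by linarith [hx.2]
       positivity)

/-- The polynomial identity `(1 - x)² (1 + x) + x + x² = 1 + x³` at the level of periods. -/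
lemma sqrt_two_mul_periodJ_three :
    ENNReal.ofReal √2 * periodJ (3 / 8) + periodH (5 / 8) + periodH (3 / 8) =
      periodH (7 / 8) + periodH (1 / 8) := by
  have hJ := sqrt_two_mul_periodJ (i := 2) (j := 1) rfl
  have h0 := periodH_eq_quarticPeriod 0
  have h1 := periodH_eq_quarticPeriod 1
  have h2 := periodH_eq_quarticPeriod 2
  have h3 := periodH_eq_quarticPeriod 3
  norm_num at hJ h0 h1 h2 h3
  rw [hJ, h0, h1, h2, h3, ← quarticPeriod_add, ← quarticPeriod_add, ← quarticPeriod_add]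
  · congr 1
    funext x
    ring
  all_goals first
    | fun_prop
    | (intro x hx
       have h0 := hx.1
       have h1 : 0 < 1 - x := by linarith [hx.2]
       positivity)

lemma poch_succ (x : ℝ) (n : ℕ) : poch x (n + 1) = poch x n * (x + n) := by
  rw [poch, Finset.prod_range_succ, poch]

lemma poch_nonneg {x : ℝ} (hx : 0 ≤ x) (n : ℕ) : 0 ≤ poch x n :=
  Finset.prod_nonneg fun _ _ => by positivity

lemma poch_mul_Gamma {x : ℝ} (hx : 0 < x) (n : ℕ) :
    poch x n * Real.Gamma x = Real.Gamma (x + n) := by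
  induction n with
  | zero => simp [poch]
  | succ n ih =>
    rw [poch_succ, mul_right_comm, ih, Nat.cast_succ, ← add_assoc,
      Real.Gamma_add_one (by positivity), mul_comm]

lemma poch_one (n : ℕ) : poch 1 n = n.factorial := by
  have := poch_mul_Gamma one_pos n
  rwa [Real.Gamma_one, mul_one, add_comm, Real.Gamma_nat_eq_factorial] at this

lemma poch_eq_factorial_mul_choose (r : ℝ) (n : ℕ) :
    poch r n = n.factorial * Ring.choose (r + n - 1) n := by
  rw [← Ring.multichoose_eq, ← nsmul_eq_mul, Ring.factorial_nsmul_multichoose_eq_ascPochhammer,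
    Polynomial.ascPochhammer_smeval_eq_eval]
  induction n with
  | zero => simp [poch]
  | succ n ih => rw [poch_succ, ih, ascPochhammer_succ_eval]

lemma hasSum_one_sub_rpow_neg (r : ℝ) {x : ℝ} (h0 : 0 ≤ x) (h1 : x < 1) :
    HasSum (fun n : ℕ => poch r n / n.factorial * x ^ n) ((1 - x) ^ (-r)) := by
  have h := (Real.one_div_one_sub_rpow_hasFPowerSeriesOnBall_zero r).hasSum (y := x)
    (by
      rw [Metric.mem_eball, edist_dist, Real.dist_eq, sub_zero, abs_of_nonneg h0]
      exact ENNReal.ofReal_lt_one.2 h1)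
  simp only [zero_add, FormalMultilinearSeries.ofScalars_apply_eq, smul_eq_mul, one_div] at h
  rw [Real.rpow_neg (by linarith)]
  have e : (fun n : ℕ => poch r n / n.factorial * x ^ n) =
      fun n : ℕ => Ring.choose (r + n - 1) n * x ^ n := by
    funext n
    rw [poch_eq_factorial_mul_choose, mul_div_cancel_left₀ _ (by positivity)]
  rw [e]
  exact h

lemma lintegral_rpow_mul_one_sub_rpow {a b : ℝ} (ha : 0 < a) (hb : 0 < b) :
    ∫⁻ x in Ioo (0 : ℝ) 1, ENNReal.ofReal (x ^ (a - 1) * (1 - x) ^ (b - 1)) =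
      ENNReal.ofReal (ProbabilityTheory.beta a b) := by
  have hB := ProbabilityTheory.beta_pos ha hb
  have h := ProbabilityTheory.lintegral_betaPDF_eq_one ha hb
  rw [ProbabilityTheory.lintegral_betaPDF] at h
  rw [← mul_one (ENNReal.ofReal _), ← h, ← lintegral_const_mul _ (by fun_prop)]
  refine lintegral_congr fun x => ?_
  rw [← ENNReal.ofReal_mul hB.le]
  congr 1
  field_simp

lemma inv_sqrt_mul_one_sub {u : ℝ} (hu : u ∈ Ioo (0 : ℝ) 1) :
    (√(u * (1 - u)))⁻¹ = u ^ (-(1 / 2) : ℝ) * (1 - u) ^ (-(1 / 2) : ℝ) := by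
  have h0 := hu.1
  have h1 : 0 < 1 - u := by linarith [hu.2]
  rw [Real.sqrt_mul h0.le, mul_inv, Real.rpow_neg h0.le, Real.rpow_neg h1.le,
    Real.sqrt_eq_rpow, Real.sqrt_eq_rpow]

lemma lintegral_arcsine_moment (n : ℕ) :
    ∫⁻ u in Ioo (0 : ℝ) 1, ENNReal.ofReal ((√(u * (1 - u)))⁻¹ * u ^ n) =
      ENNReal.ofReal (Real.pi * (poch (1 / 2) n / n.factorial)) := by
  have h := lintegral_rpow_mul_one_sub_rpow (a := 1 / 2 + n) (b := 1 / 2) (by positivity)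
    (by norm_num)
  calc _ = _ := by
        refine setLIntegral_congr_fun measurableSet_Ioo fun u hu => ?_
        rw [inv_sqrt_mul_one_sub hu, show (1 / 2 + n - 1 : ℝ) = -(1 / 2) + n by ring,
          Real.rpow_add hu.1, Real.rpow_natCast, show (1 / 2 - 1 : ℝ) = -(1 / 2) by norm_num]
        ring_nf
    _ = _ := h
    _ = _ := by
        congr 1
        rw [ProbabilityTheory.beta, ← poch_mul_Gamma (by norm_num), Real.Gamma_one_half_eq,
          show (1 / 2 + n + 1 / 2 : ℝ) = n + 1 by ring, Real.Gamma_nat_eq_factorial, mul_assoc,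
          Real.mul_self_sqrt Real.pi_pos.le]
        ring

lemma lintegral_arcsine_rpow_lt_top {b : ℝ} (hb : b < 1 / 2) :
    ∫⁻ u in Ioo (0 : ℝ) 1, ENNReal.ofReal ((√(u * (1 - u)))⁻¹ * (1 - u) ^ (-b)) < ⊤ := by
  have h := lintegral_rpow_mul_one_sub_rpow (a := 1 / 2) (b := 1 / 2 - b) (by norm_num)
    (by linarith)
  refine lt_of_eq_of_lt ?_ (h.trans_lt ENNReal.ofReal_lt_top)
  refine setLIntegral_congr_fun measurableSet_Ioo fun u hu => ?_
  rw [inv_sqrt_mul_one_sub hu, mul_assoc, ← Real.rpow_add (by linarith [hu.2])]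
  norm_num
  ring_nf

lemma periodH_eq_lintegral (r : ℝ) :
    periodH r = ∫⁻ u in Ioo (0 : ℝ) 1, ENNReal.ofReal (√(u * (1 - u)))⁻¹ *
      ∫⁻ v in Ioo (0 : ℝ) 1, ENNReal.ofReal ((√(v * (1 - v)))⁻¹ * (1 - u * v) ^ (-r)) := by
  rw [← lintegral_arcsine_mul_left]
  refine setLIntegral_congr_fun measurableSet_Ioo fun u hu => ?_
  have h0 := hu.1
  congr 1
  rw [lintegral_eq_of_bij (f := fun v => u * v) (f' := fun _ => u) (g := fun p => p / u)
    (s := Ioo 0 1) (t := Ioo 0 u) measurableSet_Ioo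
    (fun v _ => by simpa using (hasDerivAt_id v).const_mul u)
    (fun v hv => ⟨mul_pos h0 hv.1, by nlinarith [hv.2]⟩)
    (fun p hp => ⟨div_pos hp.1 h0, (div_lt_one h0).2 hp.2⟩)
    (fun v _ => by field_simp) (fun p _ => by field_simp)]
  refine setLIntegral_congr_fun measurableSet_Ioo fun v hv => ?_
  rw [← ENNReal.ofReal_mul (abs_nonneg u), abs_of_pos h0,
    show u * v * (u - u * v) = u ^ 2 * (v * (1 - v)) by ring, Real.sqrt_mul (sq_nonneg u),
    Real.sqrt_sq h0.le, ← mul_assoc, mul_inv, mul_inv_cancel_left₀ h0.ne']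

lemma periodH_lt_top {r : ℝ} (h0 : 0 < r) (h1 : r < 1) : periodH r < ⊤ := by
  have h := lintegral_arcsine_rpow_lt_top (b := r / 2) (by linarith)
  rw [periodH_eq_lintegral]
  refine lt_of_le_of_lt ?_ (ENNReal.mul_lt_top h h)
  rw [← lintegral_mul_const _ (by fun_prop)]
  refine setLIntegral_mono' measurableSet_Ioo fun u hu => ?_
  rw [ENNReal.ofReal_mul (by positivity), mul_assoc]
  gcongr
  rw [← lintegral_const_mul _ (by fun_prop)]
  refine setLIntegral_mono' measurableSet_Ioo fun v hv => ?_
  have hu1 : 0 < 1 - u := by linarith [hu.2]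
  have hv1 : 0 < 1 - v := by linarith [hv.2]
  rw [← ENNReal.ofReal_mul (by positivity)]
  refine ENNReal.ofReal_le_ofReal ?_
  rw [mul_left_comm]
  gcongr
  have h2 : 1 - u * v ≥ 1 - u := by nlinarith [hu.1, hv.2]
  have h3 : 1 - u * v ≥ 1 - v := by nlinarith [hv.1, hu.2]
  calc (1 - u * v) ^ (-r) = (1 - u * v) ^ (-(r / 2)) * (1 - u * v) ^ (-(r / 2)) := by
        rw [← Real.rpow_add (by linarith)]; ring_nf
    _ ≤ _ :=
        mul_le_mul (Real.rpow_le_rpow_of_nonpos hu1 h2 (by linarith))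
          (Real.rpow_le_rpow_of_nonpos hv1 h3 (by linarith))
          (Real.rpow_nonneg (hu1.le.trans h2) _) (Real.rpow_nonneg hu1.le _)

lemma toReal_periodH {r : ℝ} (h0 : 0 < r) :
    (periodH r).toReal = Real.pi ^ 2 * threeF2 (1 / 2) (1 / 2) r 1 1 := by
  have hc : ∀ n : ℕ, 0 ≤ poch r n / n.factorial := fun n =>
    div_nonneg (poch_nonneg h0.le n) (by positivity)
  have hd : ∀ n : ℕ, 0 ≤ Real.pi * (poch (1 / 2) n / n.factorial) := fun n =>
    mul_nonneg Real.pi_pos.le (div_nonneg (poch_nonneg (by norm_num) n) (by positivity))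
  have hsum : periodH r = ∑' n : ℕ, ENNReal.ofReal (poch r n / n.factorial *
      (Real.pi * (poch (1 / 2) n / n.factorial)) ^ 2) := by
    calc periodH r = ∫⁻ u in Ioo (0 : ℝ) 1, ∑' n : ℕ, ENNReal.ofReal ((√(u * (1 - u)))⁻¹ * u ^ n) *
          ENNReal.ofReal (poch r n / n.factorial * (Real.pi * (poch (1 / 2) n / n.factorial))) := by
          rw [periodH_eq_lintegral]
          refine setLIntegral_congr_fun measurableSet_Ioo fun u hu => ?_
          have hu0 := hu.1
          have key : ∀ v ∈ Ioo (0 : ℝ) 1,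
              ENNReal.ofReal ((√(v * (1 - v)))⁻¹ * (1 - u * v) ^ (-r)) =
              ∑' n : ℕ, ENNReal.ofReal (poch r n / n.factorial * u ^ n) *
                ENNReal.ofReal ((√(v * (1 - v)))⁻¹ * v ^ n) := by
            intro v hv
            have hv0 := hv.1
            have hs := (hasSum_one_sub_rpow_neg r (mul_pos hu0 hv.1).le
              (by nlinarith [hu.2, hv.2])).mul_left (√(v * (1 - v)))⁻¹
            rw [← hs.tsum_eq, ENNReal.ofReal_tsum_of_nonneg (fun n => mul_nonneg (by positivity)
              (mul_nonneg (hc n) (by positivity))) hs.summable]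
            refine tsum_congr fun n => ?_
            rw [← ENNReal.ofReal_mul (mul_nonneg (hc n) (by positivity))]
            congr 1
            ring
          rw [setLIntegral_congr_fun measurableSet_Ioo key, lintegral_tsum (by fun_prop),
            ← ENNReal.tsum_mul_left]
          refine tsum_congr fun n => ?_
          rw [lintegral_const_mul _ (by fun_prop), lintegral_arcsine_moment,
            ← ENNReal.ofReal_mul (mul_nonneg (hc n) (by positivity)),
            ← ENNReal.ofReal_mul (by positivity), ← ENNReal.ofReal_mul (by positivity)]
          congr 1
          ring
      _ = _ := by
          rw [lintegral_tsum (by fun_prop)]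
          refine tsum_congr fun n => ?_
          rw [lintegral_mul_const _ (by fun_prop), lintegral_arcsine_moment,
            ← ENNReal.ofReal_mul (hd n)]
          congr 1
          ring
  rw [hsum, ENNReal.tsum_toReal_eq fun n => ENNReal.ofReal_ne_top, threeF2, ← tsum_mul_left]
  refine tsum_congr fun n => ?_
  rw [ENNReal.toReal_ofReal (mul_nonneg (hc n) (sq_nonneg _)), poch_one]
  field_simp

lemma lintegral_Ioi_eq_exp (φ : ℝ → ℝ≥0∞) :
    ∫⁻ ρ in Ioi (0 : ℝ), φ ρ = ∫⁻ x : ℝ, ENNReal.ofReal (Real.exp x) * φ (Real.exp x) := by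
  rw [lintegral_eq_of_bij (f := Real.exp) (f' := Real.exp) (g := Real.log) (s := univ)
    (t := Ioi 0) MeasurableSet.univ (fun x _ => Real.hasDerivAt_exp x)
    (fun x _ => Real.exp_pos x) (fun _ _ => mem_univ _) (fun x _ => Real.log_exp x)
    (fun y hy => Real.exp_log hy), Measure.restrict_univ]
  simp only [Real.abs_exp]

/-- The modulus of `z ^ (-1/2) (z - u) ^ (-1/2) (1 - z) ^ (-r)` on the real line. -/
noncomputable def kernelAbs (u r ρ : ℝ) : ℝ := (√(ρ * |ρ - u|))⁻¹ * |1 - ρ| ^ (-r)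

lemma measurable_kernelAbs (u r : ℝ) : Measurable (kernelAbs u r) := by
  unfold kernelAbs
  fun_prop

lemma kernelAbs_nonneg (u r ρ : ℝ) : 0 ≤ kernelAbs u r ρ := by
  unfold kernelAbs
  positivity

lemma lintegral_kernelAbs_left {u r : ℝ} (h0 : 0 < u) (h1 : u < 1) (hr : 0 < r) :
    ∫⁻ ρ in Ioo 0 u, ENNReal.ofReal (kernelAbs u r ρ) < ⊤ := by
  have h := lintegral_rpow_mul_one_sub_rpow (a := 1 / 2) (b := 1 / 2) (by norm_num) (by norm_num)
  rw [lintegral_eq_of_bij (f := fun v => u * v) (f' := fun _ => u) (g := fun p => p / u)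
    (s := Ioo 0 1) (t := Ioo 0 u) measurableSet_Ioo
    (fun v _ => by simpa using (hasDerivAt_id v).const_mul u)
    (fun v hv => ⟨mul_pos h0 hv.1, by nlinarith [hv.2]⟩)
    (fun p hp => ⟨div_pos hp.1 h0, (div_lt_one h0).2 hp.2⟩)
    (fun v _ => by field_simp) (fun p _ => by field_simp)]
  refine lt_of_le_of_lt ?_ (ENNReal.mul_lt_top (ENNReal.ofReal_lt_top (r := (1 - u) ^ (-r)))
    (h.trans_lt ENNReal.ofReal_lt_top))
  rw [← lintegral_const_mul _ (by fun_prop)]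
  refine setLIntegral_mono' measurableSet_Ioo fun v hv => ?_
  have hv0 := hv.1
  have hv1 : 0 < 1 - v := by linarith [hv.2]
  have h3 : 0 < 1 - u * v := by nlinarith
  rw [← ENNReal.ofReal_mul (abs_nonneg u),
    ← ENNReal.ofReal_mul (Real.rpow_nonneg (by linarith) _), abs_of_pos h0, kernelAbs,
    abs_of_neg (show u * v - u < 0 by nlinarith), abs_of_pos h3,
    show u * v * -(u * v - u) = u ^ 2 * (v * (1 - v)) by ring, Real.sqrt_mul (sq_nonneg u),
    Real.sqrt_sq h0.le, ← mul_assoc, mul_inv, mul_inv_cancel_left₀ h0.ne', inv_sqrt_mul_one_sub hv,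
    show (1 / 2 - 1 : ℝ) = -(1 / 2) by norm_num, mul_comm]
  gcongr ENNReal.ofReal (?_ * _)
  exact Real.rpow_le_rpow_of_nonpos (by linarith) (by nlinarith) (by linarith)

lemma lintegral_kernelAbs_middle {u r : ℝ} (h0 : 0 < u) (h1 : u < 1) (hr1 : r < 1) :
    ∫⁻ ρ in Ioo u 1, ENNReal.ofReal (kernelAbs u r ρ) < ⊤ := by
  have h := lintegral_rpow_mul_one_sub_rpow (a := 1 / 2) (b := 1 - r) (by norm_num) (by linarith)
  have hd : 0 < 1 - u := by linarith
  rw [lintegral_eq_of_bij (f := fun v => u + (1 - u) * v) (f' := fun _ => 1 - u)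
    (g := fun p => (p - u) / (1 - u)) (s := Ioo 0 1) (t := Ioo u 1) measurableSet_Ioo
    (fun v _ => by simpa using ((hasDerivAt_id v).const_mul (1 - u)).const_add u)
    (fun v hv => ⟨by nlinarith [hv.1], by nlinarith [hv.2]⟩)
    (fun p hp => ⟨div_pos (by linarith [hp.1]) hd, (div_lt_one hd).2 (by linarith [hp.2])⟩)
    (fun v _ => by field_simp; ring) (fun p _ => by field_simp; ring)]
  refine lt_of_le_of_lt ?_ (ENNReal.mul_lt_top
    (ENNReal.ofReal_lt_top (r := (1 - u) * ((√(u * (1 - u)))⁻¹ * (1 - u) ^ (-r))))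
    (h.trans_lt ENNReal.ofReal_lt_top))
  rw [← lintegral_const_mul _ (by fun_prop)]
  refine setLIntegral_mono' measurableSet_Ioo fun v hv => ?_
  have hv0 := hv.1
  have hv1 : 0 < 1 - v := by linarith [hv.2]
  rw [← ENNReal.ofReal_mul (abs_nonneg _), ← ENNReal.ofReal_mul (by positivity), abs_of_pos hd,
    kernelAbs, show u + (1 - u) * v - u = (1 - u) * v by ring,
    show 1 - (u + (1 - u) * v) = (1 - u) * (1 - v) by ring, abs_of_pos (by positivity),
    abs_of_pos (by positivity), Real.mul_rpow hd.le hv1.le,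
    show (1 / 2 - 1 : ℝ) = -(1 / 2) by norm_num, show 1 - r - 1 = -r by ring,
    Real.rpow_neg hv0.le, ← Real.sqrt_eq_rpow]
  have e : (√((u + (1 - u) * v) * ((1 - u) * v)))⁻¹ ≤ (√(u * (1 - u)))⁻¹ * (√v)⁻¹ := by
    rw [← mul_inv, ← Real.sqrt_mul (by positivity)]
    refine inv_anti₀ (by positivity) (Real.sqrt_le_sqrt ?_)
    nlinarith [mul_pos (mul_pos hd hv0) (mul_pos hd hv0)]
  refine ENNReal.ofReal_le_ofReal ?_
  calc _ ≤ (1 - u) * ((√(u * (1 - u)))⁻¹ * (√v)⁻¹ * ((1 - u) ^ (-r) * (1 - v) ^ (-r))) := by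
        gcongr
    _ = _ := by ring

lemma lintegral_kernelAbs_right {u r : ℝ} (h0 : 0 < u) (h1 : u < 1) (hr : 0 < r) (hr1 : r < 1) :
    ∫⁻ ρ in Ioi 1, ENNReal.ofReal (kernelAbs u r ρ) < ⊤ := by
  have h := lintegral_rpow_mul_one_sub_rpow (a := r) (b := 1 - r) hr (by linarith)
  have hd : 0 < 1 - u := by linarith
  rw [lintegral_eq_of_bij (f := fun t => t⁻¹) (f' := fun t => -(t ^ 2)⁻¹)
    (g := fun t => t⁻¹) (s := Ioo 0 1) (t := Ioi 1) measurableSet_Ioo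
    (fun v hv => hasDerivAt_inv hv.1.ne')
    (fun v hv => (one_lt_inv₀ hv.1).2 hv.2)
    (fun p hp => by
      have hp : 1 < p := hp
      exact ⟨by positivity, inv_lt_one_of_one_lt₀ hp⟩)
    (fun v _ => inv_inv v) (fun p _ => inv_inv p)]
  refine lt_of_le_of_lt ?_ (ENNReal.mul_lt_top
    (ENNReal.ofReal_lt_top (r := (√(1 - u))⁻¹)) (h.trans_lt ENNReal.ofReal_lt_top))
  rw [← lintegral_const_mul _ (by fun_prop)]
  refine setLIntegral_mono' measurableSet_Ioo fun v hv => ?_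
  have hv0 := hv.1
  have hv1 : 0 < 1 - v := by linarith [hv.2]
  have h3 : v⁻¹ - u = (1 - u * v) / v := by field_simp
  have h4 : 1 - v⁻¹ = -((1 - v) / v) := by field_simp; ring
  have h5 : 1 - u ≤ 1 - u * v := by nlinarith
  have h6 : 0 < 1 - u * v := by linarith
  rw [← ENNReal.ofReal_mul (abs_nonneg _), ← ENNReal.ofReal_mul (by positivity),
    abs_neg, abs_of_pos (by positivity), kernelAbs, h3, h4, abs_neg,
    abs_of_pos (div_pos h6 hv0), abs_of_pos (div_pos hv1 hv0),
    Real.div_rpow hv1.le hv0.le, Real.rpow_neg hv0.le,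
    show v⁻¹ * ((1 - u * v) / v) = (1 - u * v) / v ^ 2 by field_simp,
    Real.sqrt_div' _ (by positivity), Real.sqrt_sq hv0.le, Real.rpow_sub_one hv0.ne',
    show 1 - r - 1 = -r by ring]
  have e : (√(1 - u * v))⁻¹ ≤ (√(1 - u))⁻¹ := by gcongr
  refine ENNReal.ofReal_le_ofReal ?_
  calc _ = (√(1 - u * v))⁻¹ * (v ^ r / v * (1 - v) ^ (-r)) := by
        have := Real.sqrt_pos.2 h6
        field_simp
    _ ≤ _ := by gcongr

lemma lintegral_kernelAbs {u r : ℝ} (h0 : 0 < u) (h1 : u < 1) (hr : 0 < r) (hr1 : r < 1) :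
    ∫⁻ ρ in Ioi 0, ENNReal.ofReal (kernelAbs u r ρ) < ⊤ := by
  have e : Ioi (0 : ℝ) = Ioc 0 u ∪ (Ioc u 1 ∪ Ioi 1) := by
    rw [Ioc_union_Ioi_eq_Ioi h1.le, Ioc_union_Ioi_eq_Ioi h0.le]
  rw [e]
  refine (lintegral_union_le _ _ _).trans_lt (ENNReal.add_lt_top.2 ⟨?_,
    (lintegral_union_le _ _ _).trans_lt (ENNReal.add_lt_top.2 ⟨?_,
      lintegral_kernelAbs_right h0 h1 hr hr1⟩)⟩)
  · rw [← setLIntegral_congr Ioo_ae_eq_Ioc]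
    exact lintegral_kernelAbs_left h0 h1 hr
  · rw [← setLIntegral_congr Ioo_ae_eq_Ioc]
    exact lintegral_kernelAbs_middle h0 h1 hr1

lemma integrable_exp_mul_kernelAbs {u r : ℝ} (h0 : 0 < u) (h1 : u < 1) (hr : 0 < r) (hr1 : r < 1) :
    Integrable fun x : ℝ => Real.exp x * kernelAbs u r (Real.exp x) := by
  have hm := measurable_kernelAbs u r
  refine ⟨by fun_prop, ?_⟩
  rw [hasFiniteIntegral_iff_ofReal (.of_forall fun x =>
    mul_nonneg (Real.exp_pos x).le (kernelAbs_nonneg _ _ _))]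
  have h := lintegral_kernelAbs h0 h1 hr hr1
  rw [lintegral_Ioi_eq_exp] at h
  simpa only [ENNReal.ofReal_mul (Real.exp_pos _).le] using h

open Filter Topology in
lemma tendsto_mul_kernelAbs_zero {u : ℝ} (h0 : 0 < u) (r : ℝ) :
    Tendsto (fun ρ => ρ * kernelAbs u r ρ) (𝓝[>] 0) (𝓝 0) := by
  have hc : ContinuousAt (fun ρ : ℝ => √ρ * (√|ρ - u|)⁻¹ * |1 - ρ| ^ (-r)) 0 := by
    refine ContinuousAt.mul (ContinuousAt.mul (by fun_prop) (ContinuousAt.inv₀ (by fun_prop) ?_))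
      (ContinuousAt.rpow_const (by fun_prop) (Or.inl (by simp)))
    exact (Real.sqrt_pos.2 (by simpa using h0.ne')).ne'
  have h := hc.tendsto
  simp only [Real.sqrt_zero, zero_mul] at h
  refine (h.mono_left nhdsWithin_le_nhds).congr' ?_
  filter_upwards [self_mem_nhdsWithin] with ρ hρ
  have hρ : 0 < ρ := hρ
  rw [kernelAbs, Real.sqrt_mul hρ.le, mul_inv]
  have e : ρ * (√ρ)⁻¹ = √ρ := by rw [← div_eq_mul_inv, Real.div_sqrt]
  linear_combination -(√|ρ - u|)⁻¹ * |1 - ρ| ^ (-r) * e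

open Filter Topology in
lemma tendsto_mul_kernelAbs_atTop {u r : ℝ} (h0 : 0 < u) (h1 : u < 1) (hr : 0 < r) :
    Tendsto (fun ρ => ρ * kernelAbs u r ρ) atTop (𝓝 0) := by
  have h : Tendsto (fun ρ : ℝ => (√(1 - u))⁻¹ * (ρ - 1) ^ (-r)) atTop (𝓝 0) := by
    simpa [sub_eq_add_neg] using ((tendsto_rpow_neg_atTop hr).comp
      (tendsto_atTop_add_const_right atTop (-1) tendsto_id)).const_mul (√(1 - u))⁻¹
  refine squeeze_zero' ?_ ?_ h
  · filter_upwards [eventually_gt_atTop 1] with ρ hρ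
    exact mul_nonneg (by linarith) (kernelAbs_nonneg _ _ _)
  · filter_upwards [eventually_gt_atTop 1] with ρ hρ
    have hρ0 : 0 < ρ := by linarith
    have hd : 0 < 1 - u := by linarith
    have e : (√(ρ * |ρ - u|))⁻¹ ≤ (√(1 - u))⁻¹ * ρ⁻¹ := by
      rw [← mul_inv, ← Real.sqrt_sq hρ0.le, ← Real.sqrt_mul hd.le, Real.sqrt_sq hρ0.le,
        abs_of_pos (by linarith)]
      refine inv_anti₀ (by positivity) (Real.sqrt_le_sqrt ?_)
      nlinarith [mul_pos hρ0 (mul_pos h0 (sub_pos.2 hρ))]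
    rw [kernelAbs, abs_sub_comm 1, abs_of_pos (sub_pos.2 hρ)]
    calc _ ≤ ρ * ((√(1 - u))⁻¹ * ρ⁻¹ * (ρ - 1) ^ (-r)) := by
          gcongr
      _ = _ := by field_simp

/-- The function `z ^ (1/2) (u + z) ^ (-1/2) (1 + z) ^ (-r)` in the coordinate `w = log z`. -/
noncomputable def kernelExp (u r : ℝ) (w : ℂ) : ℂ :=
  Complex.exp (w / 2 - Complex.log (u + Complex.exp w) / 2 - r * Complex.log (1 + Complex.exp w))

lemma add_exp_mem_slitPlane {a : ℝ} (ha : 0 < a) {w : ℂ} (h0 : 0 ≤ w.im) (h1 : w.im < Real.pi) :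
    (a + Complex.exp w : ℂ) ∈ Complex.slitPlane := by
  rw [Complex.mem_slitPlane_iff]
  rcases h0.eq_or_lt with h | h
  · left
    simp only [Complex.add_re, Complex.ofReal_re, Complex.exp_re, ← h, Real.cos_zero]
    positivity
  · right
    simp only [Complex.add_im, Complex.ofReal_im, Complex.exp_im, zero_add]
    exact (mul_pos (Real.exp_pos _) (Real.sin_pos_of_pos_of_lt_pi h h1)).ne'

lemma differentiableAt_kernelExp {u : ℝ} (hu : 0 < u) (r : ℝ) {w : ℂ} (h0 : 0 ≤ w.im)
    (h1 : w.im < Real.pi) : DifferentiableAt ℂ (kernelExp u r) w := by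
  have e1 := add_exp_mem_slitPlane hu h0 h1
  have e2 := add_exp_mem_slitPlane one_pos h0 h1
  rw [Complex.ofReal_one] at e2
  unfold kernelExp
  have d1 : DifferentiableAt ℂ (fun w => Complex.log (u + Complex.exp w)) w :=
    DifferentiableAt.clog (by fun_prop) e1
  have d2 : DifferentiableAt ℂ (fun w => Complex.log (1 + Complex.exp w)) w :=
    DifferentiableAt.clog (by fun_prop) e2
  fun_prop

lemma abs_sub_exp_le_norm {a : ℝ} (ha : 0 ≤ a) (w : ℂ) :
    |a - Real.exp w.re| ≤ ‖(a + Complex.exp w : ℂ)‖ := by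
  have h := abs_norm_sub_norm_le (a : ℂ) (-Complex.exp w)
  rwa [norm_neg, Complex.norm_exp, sub_neg_eq_add, Complex.norm_of_nonneg ha] at h

lemma exp_mul_kernelAbs (u r x : ℝ) (hu : Real.exp x ≠ u) (h1 : Real.exp x ≠ 1) :
    Real.exp x * kernelAbs u r (Real.exp x) =
      Real.exp (x / 2 - Real.log |u - Real.exp x| / 2 - r * Real.log |1 - Real.exp x|) := by
  have a1 : 0 < |u - Real.exp x| := abs_pos.2 (sub_ne_zero.2 hu.symm)
  have a2 : 0 < |1 - Real.exp x| := abs_pos.2 (sub_ne_zero.2 h1.symm)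
  rw [Real.exp_sub, Real.exp_sub, kernelAbs, Real.sqrt_mul (Real.exp_pos x).le, abs_sub_comm,
    ← Real.exp_half, Real.rpow_def_of_pos a2, Real.exp_half (Real.log _), Real.exp_log a1,
    mul_neg, Real.exp_neg, mul_comm r]
  have := Real.sqrt_pos.2 a1
  have e : Real.exp x = Real.exp (x / 2) * Real.exp (x / 2) := by rw [← Real.exp_add]; ring_nf
  field_simp
  rw [e]
  ring

lemma norm_kernelExp_le {u r : ℝ} (h0 : 0 < u) (hr : 0 < r) {w : ℂ} (hu : Real.exp w.re ≠ u)
    (h1 : Real.exp w.re ≠ 1) :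
    ‖kernelExp u r w‖ ≤ Real.exp w.re * kernelAbs u r (Real.exp w.re) := by
  have a1 : 0 < |u - Real.exp w.re| := abs_pos.2 (sub_ne_zero.2 hu.symm)
  have a2 : 0 < |1 - Real.exp w.re| := abs_pos.2 (sub_ne_zero.2 h1.symm)
  have b1 := abs_sub_exp_le_norm h0.le w
  have b2 := abs_sub_exp_le_norm zero_le_one w
  rw [Complex.ofReal_one] at b2
  have c1 := Real.log_le_log a1 b1
  have c2 := mul_le_mul_of_nonneg_left (Real.log_le_log a2 b2) hr.le
  rw [exp_mul_kernelAbs u r _ hu h1, kernelExp, Complex.norm_exp, Real.exp_le_exp]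
  simp only [Complex.sub_re, Complex.div_ofNat_re, Complex.re_ofReal_mul, Complex.log_re]
  linarith

lemma ae_exp_ne (a : ℝ) : ∀ᵐ x : ℝ, Real.exp x ≠ a := by
  refine (Set.Subsingleton.countable ?_).ae_notMem volume (s := {x : ℝ | Real.exp x = a})
  intro x hx y hy
  exact Real.exp_injective (hx.trans hy.symm)

lemma ae_norm_kernelExp_le {u r : ℝ} (h0 : 0 < u) (hr : 0 < r) (θ : ℝ) :
    ∀ᵐ x : ℝ, ‖kernelExp u r (x + θ * Complex.I)‖ ≤ Real.exp x * kernelAbs u r (Real.exp x) := by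
  filter_upwards [ae_exp_ne u, ae_exp_ne 1] with x h1 h2
  simpa using norm_kernelExp_le h0 hr (w := x + θ * Complex.I) (by simpa using h1) (by simpa using h2)

lemma integrable_kernelExp {u r : ℝ} (h0 : 0 < u) (h1 : u < 1) (hr : 0 < r) (hr1 : r < 1) (θ : ℝ) :
    Integrable fun x : ℝ => kernelExp u r (x + θ * Complex.I) := by
  refine (integrable_exp_mul_kernelAbs h0 h1 hr hr1).mono' ?_ (ae_norm_kernelExp_le h0 hr θ)
  unfold kernelExp
  fun_prop

open Filter Topology in
lemma integral_kernelExp_eq {u r θ : ℝ} (h0 : 0 < u) (h1 : u < 1) (hr : 0 < r) (hr1 : r < 1)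
    (hθ : 0 ≤ θ) (hθ1 : θ < Real.pi) :
    ∫ x : ℝ, kernelExp u r (x + θ * Complex.I) = ∫ x : ℝ, kernelExp u r x := by
  have hside : ∀ b : ℝ → ℝ, (∀ᶠ T in atTop, Real.exp (b T) ≠ u ∧ Real.exp (b T) ≠ 1) →
      Tendsto (fun T => Real.exp (b T) * kernelAbs u r (Real.exp (b T))) atTop (𝓝 0) →
      Tendsto (fun T : ℝ => Complex.I • ∫ y : ℝ in 0..θ, kernelExp u r (b T + y * Complex.I))
        atTop (𝓝 0) := by
    intro b hb hlim
    refine squeeze_zero_norm' (a := fun T => Real.exp (b T) * kernelAbs u r (Real.exp (b T)) *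
      |θ - 0|) ?_ (by simpa using hlim.mul_const |θ - 0|)
    filter_upwards [hb] with T hT
    rw [norm_smul, Complex.norm_I, one_mul]
    refine intervalIntegral.norm_integral_le_of_norm_le_const fun y _ => ?_
    simpa using norm_kernelExp_le h0 hr (w := b T + y * Complex.I) (by simpa using hT.1)
      (by simpa using hT.2)
  have hright := hside id (by
      have h := Real.tendsto_exp_atTop.eventually (eventually_gt_atTop 1)
      filter_upwards [h] with T hT
      exact ⟨by simp only [id]; linarith, by simp only [id]; linarith⟩)
    ((tendsto_mul_kernelAbs_atTop h0 h1 hr).comp Real.tendsto_exp_atTop)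
  have hexp : Tendsto (fun T : ℝ => Real.exp (-T)) atTop (𝓝[>] 0) :=
    Real.tendsto_exp_atBot_nhdsGT.comp tendsto_neg_atTop_atBot
  have hleft := hside (fun T => -T) (by
      have h := (hexp.mono_right nhdsWithin_le_nhds).eventually (gt_mem_nhds h0)
      filter_upwards [h] with T hT
      exact ⟨by linarith, by linarith⟩)
    ((tendsto_mul_kernelAbs_zero h0 r).comp hexp)
  have hrect : ∀ T : ℝ, (∫ x : ℝ in -T..T, kernelExp u r x) -
      (∫ x : ℝ in -T..T, kernelExp u r (x + θ * Complex.I)) +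
      Complex.I • (∫ y : ℝ in 0..θ, kernelExp u r (T + y * Complex.I)) -
      Complex.I • (∫ y : ℝ in 0..θ, kernelExp u r ((-T : ℝ) + y * Complex.I)) = 0 := by
    intro T
    have h := Complex.integral_boundary_rect_eq_zero_of_differentiableOn (kernelExp u r)
      ((-T : ℝ) : ℂ) (T + θ * Complex.I) (fun w hw => by
        refine (differentiableAt_kernelExp h0 r ?_ ?_).differentiableWithinAt
        all_goals
          have := hw.2
          simp [uIcc_of_le hθ] at this
          linarith)
    simpa using h
  have hF : Tendsto (fun T : ℝ => ∫ x : ℝ in -T..T, kernelExp u r x) atTop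
      (𝓝 (∫ x : ℝ, kernelExp u r x)) := by
    refine intervalIntegral_tendsto_integral ?_ tendsto_neg_atTop_atBot tendsto_id
    simpa using integrable_kernelExp h0 h1 hr hr1 0
  have hG : Tendsto (fun T : ℝ => ∫ x : ℝ in -T..T, kernelExp u r (x + θ * Complex.I)) atTop
      (𝓝 (∫ x : ℝ, kernelExp u r (x + θ * Complex.I))) :=
    intervalIntegral_tendsto_integral (integrable_kernelExp h0 h1 hr hr1 θ)
      tendsto_neg_atTop_atBot tendsto_id
  have hall := ((hF.sub hG).add hright).sub hleft
  have hzero := tendsto_nhds_unique hall (tendsto_const_nhds.congr fun T => (hrect T).symm)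
  rw [add_zero, sub_zero, sub_eq_zero] at hzero
  exact hzero.symm

open Filter Topology in
lemma tendsto_log_add_exp (a x : ℝ) (h : Real.exp x ≠ a) :
    Tendsto (fun θ : ℝ => Complex.log (a + Complex.exp (x + θ * Complex.I))) (𝓝[<] Real.pi)
      (𝓝 (Complex.log (a + Complex.exp (x + Real.pi * Complex.I)))) := by
  have e : Complex.exp (x + Real.pi * Complex.I) = -(Real.exp x : ℂ) := by
    rw [Complex.exp_add, Complex.exp_pi_mul_I, mul_neg_one, Complex.ofReal_exp]
  have hc : Tendsto (fun θ : ℝ => (a + Complex.exp (x + θ * Complex.I) : ℂ)) (𝓝[<] Real.pi)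
      (𝓝 (a + Complex.exp (x + Real.pi * Complex.I))) :=
    (Continuous.tendsto (by fun_prop : Continuous fun θ : ℝ =>
      (a + Complex.exp (x + θ * Complex.I) : ℂ)) _).mono_left nhdsWithin_le_nhds
  rcases lt_or_gt_of_ne h with h | h
  · refine (continuousAt_clog ?_).tendsto.comp hc
    rw [e, Complex.mem_slitPlane_iff]
    left
    simpa [-Complex.ofReal_exp] using h
  · refine (Complex.continuousWithinAt_log_of_re_neg_of_im_zero ?_ ?_).tendsto.comp
      (tendsto_nhdsWithin_iff.2 ⟨hc, ?_⟩)
    · rw [e]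
      simpa [-Complex.ofReal_exp] using h
    · rw [e]
      simp
    · filter_upwards [Ioo_mem_nhdsLT Real.pi_pos] with θ hθ
      simp only [Complex.add_im, Complex.ofReal_im, zero_add, Complex.exp_im]
      have := Real.sin_pos_of_pos_of_lt_pi hθ.1 hθ.2
      simp
      positivity

open Filter Topology in
lemma integral_kernelExp_pi {u r : ℝ} (h0 : 0 < u) (h1 : u < 1) (hr : 0 < r) (hr1 : r < 1) :
    ∫ x : ℝ, kernelExp u r (x + Real.pi * Complex.I) = ∫ x : ℝ, kernelExp u r x := by
  have h := tendsto_integral_filter_of_dominated_convergence (l := 𝓝[<] Real.pi) (μ := volume)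
    (F := fun (θ : ℝ) (x : ℝ) => kernelExp u r (x + θ * Complex.I))
    (f := fun x : ℝ => kernelExp u r (x + Real.pi * Complex.I)) _
    (Eventually.of_forall fun θ => (integrable_kernelExp h0 h1 hr hr1 θ).aestronglyMeasurable)
    (Eventually.of_forall fun θ => ae_norm_kernelExp_le h0 hr θ)
    (integrable_exp_mul_kernelAbs h0 h1 hr hr1) (by
      filter_upwards [ae_exp_ne u, ae_exp_ne 1] with x hu hx
      have t1 := tendsto_log_add_exp u x hu
      have t2 := tendsto_log_add_exp 1 x hx
      rw [Complex.ofReal_one] at t2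
      have t3 : Tendsto (fun θ : ℝ => (x + θ * Complex.I : ℂ)) (𝓝[<] Real.pi)
          (𝓝 (x + Real.pi * Complex.I)) :=
        (Continuous.tendsto (by fun_prop : Continuous fun θ : ℝ =>
          (x + θ * Complex.I : ℂ)) _).mono_left nhdsWithin_le_nhds
      exact (Complex.continuous_exp.tendsto _).comp
        (((t3.div_const 2).sub (t1.div_const 2)).sub (t2.const_mul (r : ℂ))))
  refine tendsto_nhds_unique h (tendsto_const_nhds.congr' ?_)
  filter_upwards [Ioo_mem_nhdsLT Real.pi_pos] with θ hθ
  exact (integral_kernelExp_eq h0 h1 hr hr1 hθ.1.le hθ.2).symm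

lemma log_ofReal_eq (t : ℝ) :
    Complex.log t = Real.log |t| + (if t < 0 then Real.pi else 0 : ℝ) * Complex.I := by
  rw [Complex.log, Complex.norm_real, Real.norm_eq_abs]
  split_ifs with h
  · rw [Complex.arg_ofReal_of_neg h]
  · rw [Complex.arg_ofReal_of_nonneg (not_lt.1 h)]

lemma kernelExp_add_pi_mul_I {u r x : ℝ} (hu : Real.exp x ≠ u) (h1 : Real.exp x ≠ 1) :
    kernelExp u r (x + Real.pi * Complex.I) =
      (Real.exp x * kernelAbs u r (Real.exp x) : ℝ) *
        Complex.exp ((Real.pi / 2 - (if u - Real.exp x < 0 then Real.pi else 0) / 2 -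
          r * (if 1 - Real.exp x < 0 then Real.pi else 0) : ℝ) * Complex.I) := by
  have e : ∀ a : ℝ, (a + Complex.exp (x + Real.pi * Complex.I) : ℂ) = (a - Real.exp x : ℝ) := by
    intro a
    rw [Complex.exp_add, Complex.exp_pi_mul_I, mul_neg_one, Complex.ofReal_sub, Complex.ofReal_exp,
      sub_eq_add_neg]
  have e1 := e 1
  rw [Complex.ofReal_one] at e1
  rw [exp_mul_kernelAbs u r x hu h1, kernelExp, e, e1, log_ofReal_eq, log_ofReal_eq,
    Complex.ofReal_exp, ← Complex.exp_add]
  congr 1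
  simp only [Complex.ofReal_sub, Complex.ofReal_div, Complex.ofReal_mul, Complex.ofReal_ofNat]
  ring

lemma kernelExp_ofReal {u : ℝ} (hu : 0 < u) (r x : ℝ) :
    kernelExp u r x = (Real.exp x * ((√(Real.exp x * (u + Real.exp x)))⁻¹ *
      (1 + Real.exp x) ^ (-r)) : ℝ) := by
  have hx := Real.exp_pos x
  have e : (u + Complex.exp x : ℂ) = (u + Real.exp x : ℝ) := by simp
  have e1 : (1 + Complex.exp x : ℂ) = (1 + Real.exp x : ℝ) := by simp
  have e2 : Real.exp x = Real.exp (x / 2) * Real.exp (x / 2) := by rw [← Real.exp_add]; ring_nf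
  have e3 : Real.exp (x / 2 - Real.log (u + Real.exp x) / 2 - r * Real.log (1 + Real.exp x)) =
      Real.exp x * ((√(Real.exp x * (u + Real.exp x)))⁻¹ * (1 + Real.exp x) ^ (-r)) := by
    have := Real.sqrt_pos.2 (add_pos hu hx)
    rw [Real.exp_sub, Real.exp_sub, Real.sqrt_mul hx.le, ← Real.exp_half,
      Real.rpow_def_of_pos (by positivity), Real.exp_half (Real.log _),
      Real.exp_log (by positivity), mul_neg, Real.exp_neg, mul_comm r]
    field_simp
    rw [Real.exp_half, Real.sq_sqrt hx.le]
  rw [kernelExp, e, e1, ← Complex.ofReal_log (by positivity), ← Complex.ofReal_log (by positivity),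
    ← e3, Complex.ofReal_exp]
  simp

lemma re_add_cot_mul_im {u r x : ℝ} (hr : Real.sin (Real.pi * r) ≠ 0) (hu1 : u < 1)
    (hu : Real.exp x ≠ u) (h1 : Real.exp x ≠ 1) :
    (kernelExp u r (x + Real.pi * Complex.I)).re +
        Real.cot (Real.pi * r) * (kernelExp u r (x + Real.pi * Complex.I)).im =
      Real.exp x * ((Ioo u 1).indicator (kernelAbs u r) (Real.exp x) +
        Real.cot (Real.pi * r) * (Ioo 0 u).indicator (kernelAbs u r) (Real.exp x)) := by
  have hx := Real.exp_pos x
  rw [kernelExp_add_pi_mul_I hu h1, Complex.re_ofReal_mul, Complex.im_ofReal_mul,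
    Complex.exp_ofReal_mul_I_re, Complex.exp_ofReal_mul_I_im]
  rcases lt_or_gt_of_ne hu with h | h
  · rw [if_neg (by linarith), if_neg (by linarith),
      indicator_of_notMem (by simp only [mem_Ioo]; intro h; linarith [h.1]),
      indicator_of_mem (show Real.exp x ∈ Ioo 0 u from ⟨hx, h⟩)]
    simp
    ring
  rw [if_pos (by linarith), indicator_of_notMem (s := Ioo 0 u)
    (by simp only [mem_Ioo]; intro h; linarith [h.2])]
  rcases lt_or_gt_of_ne h1 with h' | h'
  · rw [if_neg (by linarith), indicator_of_mem (show Real.exp x ∈ Ioo u 1 from ⟨h, h'⟩)]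
    simp
  · rw [if_pos (by linarith),
      indicator_of_notMem (by simp only [mem_Ioo]; intro h; linarith [h.2]), sub_self, zero_sub,
      Real.cos_neg, Real.sin_neg, Real.cot_eq_cos_div_sin, mul_comm r]
    field_simp
    ring

lemma lintegral_contour {u r : ℝ} (h0 : 0 < u) (h1 : u < 1) (hr : 0 < r) (hr1 : r < 1 / 2) :
    ∫⁻ y in Ioi 0, ENNReal.ofReal ((√(y * (u + y)))⁻¹ * (1 + y) ^ (-r)) =
      (∫⁻ x in Ioo u 1, ENNReal.ofReal ((√(x * (x - u)))⁻¹ * (1 - x) ^ (-r))) +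
        ENNReal.ofReal (Real.cot (Real.pi * r)) *
          ∫⁻ p in Ioo 0 u, ENNReal.ofReal ((√(p * (u - p)))⁻¹ * (1 - p) ^ (-r)) := by
  have hpi := Real.pi_pos
  have hs : 0 < Real.sin (Real.pi * r) :=
    Real.sin_pos_of_pos_of_lt_pi (by positivity) (by nlinarith)
  have hcot : 0 ≤ Real.cot (Real.pi * r) := by
    rw [Real.cot_eq_cos_div_sin]
    exact div_nonneg (Real.cos_nonneg_of_neg_pi_div_two_le_of_le (by nlinarith) (by nlinarith)) hs.le
  have hr2 : r < 1 := by linarith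
  have hker_int := integrable_kernelExp h0 h1 hr hr2 Real.pi
  have hker_int0 : Integrable fun x : ℝ => kernelExp u r x := by
    simpa using integrable_kernelExp h0 h1 hr hr2 0
  set f : ℝ → ℝ := fun x => Real.exp x * ((√(Real.exp x * (u + Real.exp x)))⁻¹ *
    (1 + Real.exp x) ^ (-r)) with hf
  set g : ℝ → ℝ := fun x => Real.exp x * ((Ioo u 1).indicator (kernelAbs u r) (Real.exp x) +
        Real.cot (Real.pi * r) * (Ioo 0 u).indicator (kernelAbs u r) (Real.exp x)) with hg
  have hf0 : ∀ x, 0 ≤ f x := fun x => by positivity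
  have hind : ∀ (s : Set ℝ) (ρ : ℝ), 0 ≤ s.indicator (kernelAbs u r) ρ := fun s ρ =>
    indicator_nonneg (fun ρ _ => kernelAbs_nonneg u r ρ) ρ
  have hg0 : ∀ x, 0 ≤ g x := fun x => mul_nonneg (Real.exp_pos x).le
    (add_nonneg (hind _ _) (mul_nonneg hcot (hind _ _)))
  have hker : ∀ x : ℝ, kernelExp u r x = f x := fun x => kernelExp_ofReal h0 r x
  have hfi : Integrable f := by
    simp only [hker] at hker_int0
    simpa using hker_int0.re
  have hge : (fun x : ℝ => (kernelExp u r (x + Real.pi * Complex.I)).re +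
        Real.cot (Real.pi * r) * (kernelExp u r (x + Real.pi * Complex.I)).im) =ᵐ[volume] g := by
    filter_upwards [ae_exp_ne u, ae_exp_ne 1] with x hx hx1
    exact re_add_cot_mul_im hs.ne' h1 hx hx1
  have hgi : Integrable g := (hker_int.re.add (hker_int.im.const_mul _)).congr hge
  have hval : ∫ x, g x = ∫ x, f x := by
    have hc : ∫ x : ℝ, kernelExp u r (x + Real.pi * Complex.I) = ((∫ x, f x : ℝ) : ℂ) := by
      rw [integral_kernelExp_pi h0 h1 hr hr2]
      simp only [hker]
      exact integral_ofReal
    have hre : ∫ x : ℝ, (kernelExp u r (x + Real.pi * Complex.I)).re = ∫ x, f x := by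
      have := integral_re hker_int
      simp only [RCLike.re_to_complex] at this
      rw [this, hc, Complex.ofReal_re]
    have him : ∫ x : ℝ, (kernelExp u r (x + Real.pi * Complex.I)).im = 0 := by
      have := integral_im hker_int
      simp only [RCLike.im_to_complex] at this
      rw [this, hc, Complex.ofReal_im]
    rw [← integral_congr_ae hge]
    refine (integral_add hker_int.re (hker_int.im.const_mul _)).trans ?_
    rw [integral_const_mul]
    simp only [RCLike.re_to_complex, RCLike.im_to_complex]
    rw [hre, him, mul_zero, add_zero]
  have hlin : ∫⁻ x, ENNReal.ofReal (f x) = ∫⁻ x, ENNReal.ofReal (g x) := by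
    rw [← ofReal_integral_eq_lintegral_ofReal hfi (.of_forall hf0),
      ← ofReal_integral_eq_lintegral_ofReal hgi (.of_forall hg0), hval]
  have hm := measurable_kernelAbs u r
  have hset : ∀ a b : ℝ, 0 ≤ a → ∫⁻ ρ in Ioi 0, ENNReal.ofReal
      ((Ioo a b).indicator (kernelAbs u r) ρ) = ∫⁻ ρ in Ioo a b, ENNReal.ofReal
        (kernelAbs u r ρ) := by
    intro a b ha
    have e : (fun ρ => ENNReal.ofReal ((Ioo a b).indicator (kernelAbs u r) ρ)) =
        (Ioo a b).indicator fun ρ => ENNReal.ofReal (kernelAbs u r ρ) := by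
      funext ρ
      by_cases h : ρ ∈ Ioo a b
      · rw [indicator_of_mem h, indicator_of_mem h]
      · rw [indicator_of_notMem h, indicator_of_notMem h, ENNReal.ofReal_zero]
    rw [e, lintegral_indicator measurableSet_Ioo, Measure.restrict_restrict measurableSet_Ioo,
      inter_eq_left.2 (show Ioo a b ⊆ Ioi 0 from fun ρ hρ => ha.trans_lt hρ.1)]
  calc _ = ∫⁻ x, ENNReal.ofReal (f x) := by
        rw [lintegral_Ioi_eq_exp]
        simp only [hf, ENNReal.ofReal_mul (Real.exp_pos _).le]
    _ = ∫⁻ x, ENNReal.ofReal (g x) := hlin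
    _ = ∫⁻ ρ in Ioi 0, (ENNReal.ofReal ((Ioo u 1).indicator (kernelAbs u r) ρ) +
          ENNReal.ofReal (Real.cot (Real.pi * r)) *
            ENNReal.ofReal ((Ioo 0 u).indicator (kernelAbs u r) ρ)) := by
        rw [lintegral_Ioi_eq_exp]
        refine lintegral_congr fun x => ?_
        rw [← ENNReal.ofReal_mul hcot, ← ENNReal.ofReal_add (hind _ _) (mul_nonneg hcot (hind _ _)),
          ← ENNReal.ofReal_mul (Real.exp_pos x).le]
    _ = (∫⁻ ρ in Ioo u 1, ENNReal.ofReal (kernelAbs u r ρ)) +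
          ENNReal.ofReal (Real.cot (Real.pi * r)) *
            ∫⁻ ρ in Ioo 0 u, ENNReal.ofReal (kernelAbs u r ρ) := by
        have m1 : Measurable fun ρ => ENNReal.ofReal ((Ioo u 1).indicator (kernelAbs u r) ρ) :=
          (hm.indicator measurableSet_Ioo).ennreal_ofReal
        have m2 : Measurable fun ρ => ENNReal.ofReal ((Ioo 0 u).indicator (kernelAbs u r) ρ) :=
          (hm.indicator measurableSet_Ioo).ennreal_ofReal
        rw [lintegral_add_left m1, lintegral_const_mul _ m2, hset u 1 h0.le, hset 0 u le_rfl]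
    _ = _ := by
        congr 1
        · refine setLIntegral_congr_fun measurableSet_Ioo fun ρ hρ => ?_
          rw [kernelAbs, abs_of_pos (sub_pos.2 hρ.1), abs_of_pos (sub_pos.2 hρ.2)]
        · congr 1
          refine setLIntegral_congr_fun measurableSet_Ioo fun ρ hρ => ?_
          rw [kernelAbs, abs_sub_comm, abs_of_pos (sub_pos.2 hρ.2),
            abs_of_pos (by linarith [hρ.2])]

lemma measurable_lintegral_Ioo {F : ℝ → ℝ → ℝ≥0∞} (hF : Measurable (Function.uncurry F)) (a : ℝ) :
    Measurable fun u => ∫⁻ p in Ioo a u, F u p := by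
  have hT : MeasurableSet {q : ℝ × ℝ | a < q.2 ∧ q.2 < q.1} :=
    (measurableSet_lt measurable_const measurable_snd).inter
      (measurableSet_lt measurable_snd measurable_fst)
  have h : (fun u => ∫⁻ p in Ioo a u, F u p) = fun u => ∫⁻ p,
      {q : ℝ × ℝ | a < q.2 ∧ q.2 < q.1}.indicator (Function.uncurry F) (u, p) := by
    funext u
    rw [← lintegral_indicator measurableSet_Ioo]
    rfl
  rw [h]
  exact Measurable.lintegral_prod_right' (hF.indicator hT)

lemma periodH_one_sub {r : ℝ} (hr : 0 < r) (hr1 : r < 1 / 2) :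
    periodH (1 - r) = periodJ r + ENNReal.ofReal (Real.cot (Real.pi * r)) * periodH r := by
  have hm : Measurable fun u => ∫⁻ p in Ioo 0 u,
      ENNReal.ofReal ((√(p * (u - p)))⁻¹ * (1 - p) ^ (-r)) :=
    measurable_lintegral_Ioo (by simp only [Function.uncurry_def]; fun_prop) 0
  rw [← lintegral_arcsine_mul_neg, ← lintegral_arcsine_mul_right, ← lintegral_arcsine_mul_left,
    ← lintegral_const_mul _ (by fun_prop), ← lintegral_add_right _ (by fun_prop)]
  refine setLIntegral_congr_fun measurableSet_Ioo fun u hu => ?_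
  rw [lintegral_contour hu.1 hu.2 hr hr1, mul_add, mul_left_comm]

lemma cos_pi_div_eight_eq : Real.cos (Real.pi / 8) = (1 + √2) * Real.sin (Real.pi / 8) := by
  have hs : 0 < Real.sin (Real.pi / 8) :=
    Real.sin_pos_of_pos_of_lt_pi (by positivity) (by linarith [Real.pi_pos])
  have h1 := Real.sin_two_mul (Real.pi / 8)
  have h2 := Real.cos_two_mul' (Real.pi / 8)
  have h3 := Real.sin_sq_add_cos_sq (Real.pi / 8)
  rw [show 2 * (Real.pi / 8) = Real.pi / 4 by ring] at h1 h2
  rw [Real.sin_pi_div_four] at h1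
  rw [Real.cos_pi_div_four] at h2
  have h4 : √2 * √2 = 2 := Real.mul_self_sqrt (by norm_num)
  have h5 : Real.sin (Real.pi / 8) ^ 2 = (1 - √2 / 2) / 2 := by linarith
  refine mul_left_cancel₀ hs.ne' ?_
  linear_combination -h1 / 2 - (1 + √2) * h5 + h4 / 4

lemma sin_three_pi_div_eight_eq :
    Real.sin (3 * Real.pi / 8) = (1 + √2) * Real.sin (Real.pi / 8) := by
  rw [← cos_pi_div_eight_eq, ← Real.cos_pi_div_two_sub]
  ring_nf

lemma cot_pi_div_eight : Real.cot (Real.pi * (1 / 8)) = 1 + √2 := by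
  have hs : 0 < Real.sin (Real.pi / 8) :=
    Real.sin_pos_of_pos_of_lt_pi (by positivity) (by linarith [Real.pi_pos])
  rw [Real.cot_eq_cos_div_sin, mul_one_div, cos_pi_div_eight_eq, mul_div_cancel_right₀ _ hs.ne']

lemma cot_three_pi_div_eight : Real.cot (Real.pi * (3 / 8)) = √2 - 1 := by
  have hs : 0 < Real.sin (Real.pi / 8) :=
    Real.sin_pos_of_pos_of_lt_pi (by positivity) (by linarith [Real.pi_pos])
  have h4 : √2 * √2 = 2 := Real.mul_self_sqrt (by norm_num)
  have hc : Real.cos (3 * Real.pi / 8) = Real.sin (Real.pi / 8) := by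
    rw [← Real.cos_pi_div_two_sub]
    ring_nf
  rw [Real.cot_eq_cos_div_sin, show Real.pi * (3 / 8) = 3 * Real.pi / 8 by ring, hc,
    sin_three_pi_div_eight_eq, div_eq_iff (by positivity)]
  linear_combination -Real.sin (Real.pi / 8) * h4

lemma toReal_periodH_relations :
    (periodH (1 / 8)).toReal = √2 * (periodH (5 / 8)).toReal - (periodH (3 / 8)).toReal ∧
      (periodH (7 / 8)).toReal = (periodH (5 / 8)).toReal + √2 * (periodH (3 / 8)).toReal := by
  have f1 := (periodH_lt_top (r := 1 / 8) (by norm_num) (by norm_num)).ne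
  have f3 := (periodH_lt_top (r := 3 / 8) (by norm_num) (by norm_num)).ne
  have f5 := (periodH_lt_top (r := 5 / 8) (by norm_num) (by norm_num)).ne
  have f7 := (periodH_lt_top (r := 7 / 8) (by norm_num) (by norm_num)).ne
  have c1 := periodH_one_sub (r := 1 / 8) (by norm_num) (by norm_num)
  have c3 := periodH_one_sub (r := 3 / 8) (by norm_num) (by norm_num)
  rw [cot_pi_div_eight, show (1 - 1 / 8 : ℝ) = 7 / 8 by norm_num] at c1
  rw [cot_three_pi_div_eight, show (1 - 3 / 8 : ℝ) = 5 / 8 by norm_num] at c3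
  have g1 : periodJ (1 / 8) ≠ ⊤ := ne_top_of_le_ne_top f7 (c1 ▸ le_self_add)
  have g3 : periodJ (3 / 8) ≠ ⊤ := ne_top_of_le_ne_top f5 (c3 ▸ le_self_add)
  have h4 : √2 * √2 = 2 := Real.mul_self_sqrt (by norm_num)
  have h1 : (1 : ℝ) ≤ √2 := Real.one_le_sqrt.2 (by norm_num)
  have e1 := congrArg ENNReal.toReal c1
  have e3 := congrArg ENNReal.toReal c3
  have d1 := congrArg ENNReal.toReal sqrt_two_mul_periodJ_one
  have d3 := congrArg ENNReal.toReal sqrt_two_mul_periodJ_three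
  rw [ENNReal.toReal_add g1 (by finiteness), ENNReal.toReal_mul,
    ENNReal.toReal_ofReal (by positivity)] at e1
  rw [ENNReal.toReal_add g3 (by finiteness), ENNReal.toReal_mul,
    ENNReal.toReal_ofReal (by linarith)] at e3
  rw [ENNReal.toReal_add (by finiteness) f1, ENNReal.toReal_add (by finiteness) (by finiteness),
    ENNReal.toReal_add f7 (by finiteness), ENNReal.toReal_mul, ENNReal.toReal_mul,
    ENNReal.toReal_mul, ENNReal.toReal_ofReal (by positivity),
    ENNReal.toReal_ofReal (by positivity)] at d1
  rw [ENNReal.toReal_add (by finiteness) f3, ENNReal.toReal_add (by finiteness) f5,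
    ENNReal.toReal_add f7 f1, ENNReal.toReal_mul, ENNReal.toReal_ofReal (by positivity)] at d3
  set a1 := (periodH (1 / 8)).toReal
  set a3 := (periodH (3 / 8)).toReal
  set a5 := (periodH (5 / 8)).toReal
  set a7 := (periodH (7 / 8)).toReal
  have k1 : (√2 - 1) * a7 - (√2 + 1) * a1 + 3 * a5 - 3 * a3 = 0 := by
    linear_combination d1 + √2 * e1 + a1 * h4
  have k3 : (√2 + 1) * a5 + (√2 - 1) * a3 = a7 + a1 := by
    linear_combination d3 + √2 * e3 + a3 * h4
  have k : a1 = √2 * a5 - a3 := by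
    refine mul_left_cancel₀ (show (2 * √2 : ℝ) ≠ 0 by positivity) ?_
    linear_combination -k1 - (√2 - 1) * k3 + (a3 - a5) * h4
  refine ⟨k, ?_⟩
  linear_combination -k3 - k

lemma Fval_eq {q : ℚ} (h0 : 0 < q) : Fval q 1 =
    (2 : ℝ) ^ ((1 : ℝ) - 4 * q) * (Real.pi / Real.sin (Real.pi * q)) / (2 * q.den) *
      ((periodH q).toReal / Real.pi ^ 2) := by
  have hpi := Real.pi_pos
  rw [toReal_periodH (Rat.cast_pos.2 h0), Fval, betaFn, Rat.cast_one, add_sub_cancel,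
    Real.Gamma_one, div_one, Real.Gamma_mul_Gamma_one_sub, mul_div_cancel_left₀ _ (by positivity)]

open Complex in
/-- F(1/8,1) + 8i·F(7/8,1) = −2·(1 − i√2)·(1 + √2)·(F(3/8,1) − 2i·F(5/8,1)). -/
theorem three_term_class6_kummer :
    (Fval (1/8) 1 : ℂ) + 8 * I * (Fval (7/8) 1 : ℂ) =
      -2 * (1 - I * (Real.sqrt 2 : ℂ)) * (1 + (Real.sqrt 2 : ℂ)) *
        ((Fval (3/8) 1 : ℂ) - 2 * I * (Fval (5/8) 1 : ℂ)) := by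
  obtain ⟨k1, k7⟩ := toReal_periodH_relations
  have hs : 0 < Real.sin (Real.pi / 8) :=
    Real.sin_pos_of_pos_of_lt_pi (by positivity) (by linarith [Real.pi_pos])
  have hpi := Real.pi_pos
  have h4 : √2 * √2 = 2 := Real.mul_self_sqrt (by norm_num)
  have hp : ∀ n : ℕ, (2 : ℝ) ^ ((1 / 2 : ℝ) - n) = √2 / 2 ^ n := fun n => by
    rw [Real.rpow_sub two_pos, Real.rpow_natCast, Real.sqrt_eq_rpow]
  obtain ⟨K, hK⟩ : ∃ K, K = √2 / (16 * Real.pi * Real.sin (Real.pi / 8)) := ⟨_, rfl⟩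
  have F1 : Fval (1 / 8) 1 = K * (periodH (1 / 8)).toReal := by
    rw [Fval_eq (by norm_num), show (1 / 8 : ℚ).den = 8 by norm_num]
    push_cast
    rw [show (1 - 4 * (1 / 8) : ℝ) = 1 / 2 - (0 : ℕ) by norm_num, hp, mul_one_div]
    rw [hK]
    generalize Real.sin (Real.pi / 8) = x at hs ⊢
    field_simp
    ring
  have F3 : (1 + √2) * Fval (3 / 8) 1 = K * (periodH (3 / 8)).toReal / 2 := by
    rw [Fval_eq (by norm_num), show (3 / 8 : ℚ).den = 8 by norm_num]
    push_cast
    rw [show (1 - 4 * (3 / 8) : ℝ) = 1 / 2 - (1 : ℕ) by norm_num, hp,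
      show Real.pi * (3 / 8) = 3 * Real.pi / 8 by ring, sin_three_pi_div_eight_eq]
    rw [hK]
    generalize Real.sin (Real.pi / 8) = x at hs ⊢
    field_simp
    ring
  have F5 : (1 + √2) * Fval (5 / 8) 1 = K * (periodH (5 / 8)).toReal / 4 := by
    rw [Fval_eq (by norm_num), show (5 / 8 : ℚ).den = 8 by norm_num]
    push_cast
    rw [show (1 - 4 * (5 / 8) : ℝ) = 1 / 2 - (2 : ℕ) by norm_num, hp,
      show Real.pi * (5 / 8) = Real.pi - 3 * Real.pi / 8 by ring, Real.sin_pi_sub,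
      sin_three_pi_div_eight_eq]
    rw [hK]
    generalize Real.sin (Real.pi / 8) = x at hs ⊢
    field_simp
    ring
  have F7 : Fval (7 / 8) 1 = K * (periodH (7 / 8)).toReal / 8 := by
    rw [Fval_eq (by norm_num), show (7 / 8 : ℚ).den = 8 by norm_num]
    push_cast
    rw [show (1 - 4 * (7 / 8) : ℝ) = 1 / 2 - (3 : ℕ) by norm_num, hp,
      show Real.pi * (7 / 8) = Real.pi - Real.pi / 8 by ring, Real.sin_pi_sub]
    rw [hK]
    generalize Real.sin (Real.pi / 8) = x at hs ⊢
    field_simp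
    ring
  have hre : Fval (1 / 8) 1 = -2 * (1 + √2) * (Fval (3 / 8) 1 - 2 * √2 * Fval (5 / 8) 1) := by
    linear_combination F1 + K * k1 + 2 * F3 - 4 * √2 * F5
  have him : 8 * Fval (7 / 8) 1 = 2 * (1 + √2) * (√2 * Fval (3 / 8) 1 + 2 * Fval (5 / 8) 1) := by
    linear_combination 8 * F7 + K * k7 - 2 * √2 * F3 - 4 * F5
  have hre' := congrArg Complex.ofReal hre
  have him' := congrArg Complex.ofReal him
  push_cast at hre' him'
  linear_combination hre' + I * him' +
    4 * (√2 : ℂ) * (1 + (√2 : ℂ)) * (Fval (5 / 8) 1 : ℂ) * I_sq
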